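/- If G is a minimal bicritical graph with n ≥ 6 vertices, then G has at most 5(n − 2)/2 edges. -/

import Mathlib

open SimpleGraph

/-- A graph has a perfect matching. -/
def HasPerfectMatching {V : Type*} (G : SimpleGraph V) : Prop :=
  ∃ M : G.Subgraph, M.IsPerfectMatching

/-- `G` is 3-connected: at least 4 vertices, and deleting any at most 2
vertices leaves a connected graph. -/
def IsThreeConnected {V : Type*} [Fintype V] (G : SimpleGraph V) : Prop :=
  4 ≤ Fintype.card V ∧ ∀ S : Set V, S.ncard ≤ 2 → (G.induce Sᶜ).Connected

/-- A brick: a 3-connected graph such that deleting any two distinct vertices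
leaves a graph with a perfect matching. -/
def IsBrick {V : Type*} [Fintype V] (G : SimpleGraph V) : Prop :=
  IsThreeConnected G ∧
    ∀ u v : V, u ≠ v → HasPerfectMatching (G.induce ({u, v} : Set V)ᶜ)

/-- A minimal brick: a brick such that deleting any edge destroys brickness. -/
def IsMinimalBrick {V : Type*} [Fintype V] (G : SimpleGraph V) : Prop :=
  IsBrick G ∧ ∀ e ∈ G.edgeSet, ¬ IsBrick (G.deleteEdges {e})

/-- A graph is bicritical if deleting any two distinct vertices leaves a graph
with a perfect matching. -/
def IsBicritical {V : Type*} [Fintype V] (G : SimpleGraph V) : Prop :=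
  ∀ u v : V, u ≠ v → HasPerfectMatching (G.induce ({u, v} : Set V)ᶜ)

/-- A bicritical graph is minimal if deleting any edge destroys bicriticality. -/
def IsMinimalBicritical {V : Type*} [Fintype V] (G : SimpleGraph V) : Prop :=
  IsBicritical G ∧ ∀ e ∈ G.edgeSet, ¬ IsBicritical (G.deleteEdges {e})

/-!
A bicritical graph with `n ≥ 6` vertices contains a bicritical spanning subgraph with at most
`5n/2 - 5` edges, which by minimality must be the whole graph. The subgraph is grown from a perfect
matching `M` by ears. At each stage it consists of a graph on a vertex set `U` closed under `M` and
of the edges of `M` outside `U`; the set `U` is coloured so that deleting two vertices of different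
colours leaves a perfect matching. The potential `|U| + #colours - #edges` never decreases.

* As long as two vertices of equal colour are removable in a larger graph `K'`, the colouring can be
  refined at the cost of at most one edge of `K'`. By Tutte's theorem the obstruction is a barrier.
  All vertices of a barrier have the same colour, and uncrossing shows that the union of two
  intersecting barriers is a barrier. So a colour class that is not a barrier splits for free, and
  one that is a barrier stops being so after the addition of a suitable edge of `K'`.
* If a perfect matching `N` leaves `U`, the symmetric difference of `M` and `N` consists of
  alternating cycles, and some of the paths that they form outside `U` are added as ears. For this,
  the pairs `a`, `M a` outside `U` are removed from `N` one at a time, joining their former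
  partners; restoring such a pair subdivides an edge, which adds two vertices and two edges, or only
  one edge if the subdivided edge is not in `M`.

The matching `M`, with `U` one of its edges in two colours, has potential `4 - n/2`. Since `n ≥ 6`,
there is an ear that raises the potential, so it ends up at least `5 - n/2`; once all `n` vertices
have different colours, `2n - #edges ≥ 5 - n/2` is the bound.
-/

section Matchings

variable {V : Type*} {K K' : SimpleGraph V} {f : V → V} {u v : V}

/-- A perfect matching of `K`, encoded as the involution exchanging the two ends of each of its
edges. -/
structure IsMatchingMap (K : SimpleGraph V) (f : V → V) : Prop where
  involutive : Function.Involutive f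
  adj : ∀ v, K.Adj v (f v)

/-- A perfect matching of `K - u - v`, encoded as an involution of the whole vertex set that
exchanges `u` and `v`, whether or not these two are adjacent. -/
structure IsMatchingMapOff (K : SimpleGraph V) (u v : V) (f : V → V) : Prop where
  involutive : Function.Involutive f
  apply_left : f u = v
  adj : ∀ w, w ≠ u → w ≠ v → K.Adj w (f w)

theorem IsMatchingMap.apply_ne (hf : IsMatchingMap K f) (v : V) : f v ≠ v :=
  (hf.adj v).ne'

theorem IsMatchingMap.mono (hK : K ≤ K') (hf : IsMatchingMap K f) : IsMatchingMap K' f :=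
  ⟨hf.involutive, fun v => hK (hf.adj v)⟩

theorem IsMatchingMap.isMatchingMapOff (hf : IsMatchingMap K f) (v : V) :
    IsMatchingMapOff K v (f v) f :=
  ⟨hf.involutive, rfl, fun w _ _ => hf.adj w⟩

theorem IsMatchingMapOff.apply_right (hf : IsMatchingMapOff K u v f) : f v = u := by
  rw [← hf.apply_left, hf.involutive]

theorem IsMatchingMapOff.symm (hf : IsMatchingMapOff K u v f) : IsMatchingMapOff K v u f :=
  ⟨hf.involutive, hf.apply_right, fun w hv hu => hf.adj w hu hv⟩

theorem IsMatchingMapOff.mono (hK : K ≤ K') (hf : IsMatchingMapOff K u v f) :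
    IsMatchingMapOff K' u v f :=
  ⟨hf.involutive, hf.apply_left, fun w hu hv => hK (hf.adj w hu hv)⟩

theorem IsMatchingMapOff.isMatchingMap (hf : IsMatchingMapOff K u v f) (huv : K.Adj u v) :
    IsMatchingMap K f := by
  refine ⟨hf.involutive, fun w => ?_⟩
  by_cases hu : w = u
  · rwa [hu, hf.apply_left]
  by_cases hv : w = v
  · rw [hv, hf.apply_right]
    exact huv.symm
  exact hf.adj w hu hv

theorem exists_isMatchingMapOff_of_hasPerfectMatching
    (h : HasPerfectMatching (K.induce ({u, v} : Set V)ᶜ)) : ∃ f, IsMatchingMapOff K u v f := by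
  classical
  obtain ⟨P, hP⟩ := h
  choose g hg hg_unique using Subgraph.isPerfectMatching_iff.1 hP
  have hgg (w) : g (g w) = w := (hg_unique _ _ (hg w).symm).symm
  have hmem (w) : w ∈ ({u, v} : Set V) → Equiv.swap u v w ∈ ({u, v} : Set V) := by
    rintro (rfl | rfl) <;> simp
  refine ⟨fun w => if hw : w ∈ ({u, v} : Set V)ᶜ then g ⟨w, hw⟩ else Equiv.swap u v w,
    fun w => ?_, by simp, fun w hu hv => ?_⟩
  · by_cases hw : w ∈ ({u, v} : Set V)ᶜ
    · simp only [dif_pos hw, Subtype.coe_prop, Subtype.coe_eta, dite_true, hgg]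
    · have := hmem w (Set.notMem_compl_iff.1 hw)
      simp only [dif_neg hw, dif_neg (Set.notMem_compl_iff.2 this), Equiv.swap_apply_self]
  · have hw : w ∈ ({u, v} : Set V)ᶜ := by simp [hu, hv]
    simp only [dif_pos hw]
    exact P.adj_sub (hg ⟨w, hw⟩)

theorem IsMatchingMapOff.hasPerfectMatching (hf : IsMatchingMapOff K u v f) :
    HasPerfectMatching (K.induce ({u, v} : Set V)ᶜ) := by
  have hmaps (w : ({u, v} : Set V)ᶜ.Elem) : f w ∈ ({u, v} : Set V)ᶜ := by
    rintro (h | h) <;> apply w.2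
    · exact .inr ((hf.involutive.eq_iff.1 h).trans hf.apply_left)
    · exact .inl ((hf.involutive.eq_iff.1 h).trans hf.apply_right)
  have hadj (w : ({u, v} : Set V)ᶜ.Elem) : K.Adj w (f w) :=
    hf.adj w (fun h => w.2 (.inl h)) (fun h => w.2 (.inr h))
  let P : (K.induce ({u, v} : Set V)ᶜ).Subgraph :=
    { verts := Set.univ
      Adj := fun a b => f a = b
      adj_sub := fun {a b} hab => show K.Adj a b from hab ▸ hadj a
      edge_vert := fun _ => Set.mem_univ _
      symm := ⟨fun a b hab => by rw [← hab, hf.involutive]⟩ }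
  exact ⟨P, Subgraph.isPerfectMatching_iff.2 fun w =>
    ⟨⟨f w, hmaps w⟩, rfl, fun _ hb => Subtype.ext (Eq.symm hb)⟩⟩

theorem isBicritical_iff [Fintype V] :
    IsBicritical K ↔ ∀ u v, u ≠ v → ∃ f, IsMatchingMapOff K u v f :=
  forall₃_congr fun _ _ _ =>
    ⟨exists_isMatchingMapOff_of_hasPerfectMatching, fun ⟨_, hf⟩ => hf.hasPerfectMatching⟩

theorem even_ncard_of_involutive [Finite V] {S : Set V} (hf : Function.Involutive f)
    (hS : ∀ v ∈ S, f v ∈ S) (hne : ∀ v ∈ S, f v ≠ v) : Even S.ncard := by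
  classical
  have := Fintype.ofFinite V
  have hsum : ∑ _v ∈ S.toFinset, (1 : ZMod 2) = 0 :=
    Finset.sum_involution (fun v _ => f v) (fun _ _ => by decide)
      (fun v hv _ => hne v (Set.mem_toFinset.1 hv))
      (fun v hv => Set.mem_toFinset.2 (hS v (Set.mem_toFinset.1 hv))) (fun v _ => hf v)
  rw [Set.ncard_eq_toFinset_card', ← ZMod.natCast_eq_zero_iff_even]
  simpa using hsum

theorem IsMatchingMap.even_ncard [Finite V] (hf : IsMatchingMap K f) {S : Set V}
    (hS : ∀ v ∈ S, f v ∈ S) : Even S.ncard :=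
  even_ncard_of_involutive hf.involutive hS fun v _ => hf.apply_ne v

end Matchings

section Barriers

variable {V : Type*} {K K' : SimpleGraph V} {M N : V → V} {X Y : Set V} {t u v w z : V}

/-- The component of `w` in `K - X`, as a set of vertices of `K`. Keeping the vertices of `X` as
isolated vertices avoids the subtype `Xᶜ`. -/
def branch (K : SimpleGraph V) (X : Set V) (w : V) : Set V :=
  {v | ((K.induce Xᶜ).spanningCoe).Reachable w v}

theorem mem_branch_self : w ∈ branch K X w :=
  Reachable.refl w

theorem mem_branch_comm : v ∈ branch K X w ↔ w ∈ branch K X v :=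
  reachable_comm

theorem mem_branch_of_adj (hv : v ∈ branch K X w) (hvX : v ∉ X) (huX : u ∉ X) (h : K.Adj v u) :
    u ∈ branch K X w :=
  hv.trans (Adj.reachable (by simpa [hvX, huX] using h))

theorem branch_mono (hK : K ≤ K') (hXY : Y ⊆ X) : branch K X w ⊆ branch K' Y w := by
  refine fun v hv => hv.mono fun a b hab => ?_
  simp only [map_adj, comap_adj, Function.Embedding.subtype_apply, Subtype.exists] at hab ⊢
  obtain ⟨a, ha, b, hb, hab, rfl, rfl⟩ := hab
  exact ⟨a, fun h => ha (hXY h), b, fun h => hb (hXY h), hK hab, rfl, rfl⟩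

theorem branch_induction {p : V → Prop} (hw : p w)
    (hp : ∀ a b, a ∉ X → b ∉ X → K.Adj a b → p a → p b) : ∀ v ∈ branch K X w, p v := by
  intro v hv
  rw [branch, Set.mem_ofPred_eq, reachable_iff_reflTransGen] at hv
  induction hv with
  | refl => exact hw
  | tail _ hab ih =>
    simp only [map_adj, comap_adj, Function.Embedding.subtype_apply, Subtype.exists] at hab
    obtain ⟨a, ha, b, hb, hab, rfl, rfl⟩ := hab
    exact hp a b ha hb hab ih

theorem notMem_of_mem_branch (hw : w ∉ X) (hv : v ∈ branch K X w) : v ∉ X :=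
  branch_induction (p := (· ∉ X)) hw (fun _ _ _ hb _ _ => hb) v hv

/-- A barrier `X` of `K` in the sense of Tutte, certified by the perfect matching `M`: deleting `X`
leaves odd components that `M` matches bijectively to `X`. -/
structure IsMatchedBarrier (K : SimpleGraph V) (M : V → V) (X : Set V) : Prop where
  notMem : ∀ x ∈ X, M x ∉ X
  eq_of_mem_branch : ∀ x ∈ X, ∀ y ∈ X, M y ∈ branch K X (M x) → x = y

theorem isMatchedBarrier_singleton (hM : IsMatchingMap K M) : IsMatchedBarrier K M {v} := by
  refine ⟨?_, ?_⟩
  · rintro _ rfl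
    exact hM.apply_ne _
  · rintro _ rfl _ rfl _
    rfl

namespace IsMatchedBarrier

theorem apply_mem_branch (hX : IsMatchedBarrier K M X) (hM : IsMatchingMap K M) (hw : w ∈ X)
    (hv : v ∈ branch K X (M w)) (hne : v ≠ M w) : M v ∈ branch K X (M w) := by
  have hvX := notMem_of_mem_branch (hX.notMem w hw) hv
  refine mem_branch_of_adj hv hvX (fun hMv => hne ?_) (hM.adj v)
  have hwv : w = M v := hX.eq_of_mem_branch w hw (M v) hMv (by rwa [hM.involutive])
  rw [hwv, hM.involutive]

theorem odd_ncard_branch [Finite V] (hX : IsMatchedBarrier K M X) (hM : IsMatchingMap K M)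
    (hw : w ∈ X) : Odd (branch K X (M w)).ncard := by
  rw [← Set.ncard_sdiff_singleton_add_one (mem_branch_self (K := K) (X := X) (w := M w))]
  refine Even.add_one (hM.even_ncard fun v ⟨hv, hne⟩ =>
    ⟨hX.apply_mem_branch hM hw hv hne, fun h => ?_⟩)
  exact notMem_of_mem_branch (hX.notMem w hw) hv (hM.involutive.injective h ▸ hw)

/-- The edges of `N` leaving the branches inject into `X \ {z}`, so some branch is left by no edge
of `N` other than the virtual edge `zt`, and odd branches must be left by some edge. -/
theorem exists_branch_closed_off [Finite V] (hX : IsMatchedBarrier K M X)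
    (hM : IsMatchingMap K M) (hN : IsMatchingMapOff K z t N) (hz : z ∈ X) :
    ∃ w ∈ X, t ∈ branch K X (M w) ∧
      ∀ v ∈ branch K X (M w), v ≠ t → N v ∈ branch K X (M w) := by
  have hadj {w v} (hw : w ∈ X) (hv : v ∈ branch K X (M w)) (hvt : v ≠ t) : K.Adj v (N v) :=
    hN.adj v (fun h => notMem_of_mem_branch (hX.notMem w hw) hv (h ▸ hz)) hvt
  obtain ⟨w, hw, hclosed⟩ :
      ∃ w ∈ X, ∀ v ∈ branch K X (M w), v ≠ t → N v ∈ branch K X (M w) := by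
    by_contra! hleave
    choose! e he_mem he_ne he_leave using hleave
    have hmaps : Set.MapsTo (N ∘ e) X (X \ {z}) := fun w hw => by
      refine ⟨by_contra fun hNX => he_leave w hw ?_, fun hNz => he_ne w hw ?_⟩
      · exact mem_branch_of_adj (he_mem w hw) (notMem_of_mem_branch (hX.notMem w hw) (he_mem w hw))
          hNX (hadj hw (he_mem w hw) (he_ne w hw))
      · rw [← hN.apply_left, ← Set.mem_singleton_iff.1 hNz, Function.comp_apply, hN.involutive]
    have hinj : Set.InjOn (N ∘ e) X := fun w hw w' hw' h => by
      have he : e w = e w' := hN.involutive.injective h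
      exact hX.eq_of_mem_branch w hw w' hw'
        ((he_mem w hw).trans (mem_branch_comm.1 (he ▸ he_mem w' hw')))
    exact (Set.ncard_le_ncard_of_injOn _ hmaps hinj).not_gt (Set.ncard_sdiff_singleton_lt_of_mem hz)
  refine ⟨w, hw, by_contra fun ht => ?_, hclosed⟩
  have hne {v} (hv : v ∈ branch K X (M w)) : v ≠ t := fun h => ht (h ▸ hv)
  exact Nat.not_odd_iff_even.2
    (even_ncard_of_involutive hN.involutive (fun v hv => hclosed v hv (hne hv))
      fun v hv => (hadj hw hv (hne hv)).ne') (hX.odd_ncard_branch hM hw)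

theorem not_isMatchingMapOff [Finite V] (hX : IsMatchedBarrier K M X) (hM : IsMatchingMap K M)
    (hu : u ∈ X) (hv : v ∈ X) : ¬ IsMatchingMapOff K u v N := fun hN =>
  let ⟨w, hw, hvw, _⟩ := hX.exists_branch_closed_off hM hN hu
  notMem_of_mem_branch (hX.notMem w hw) hvw hv

/-- If the two branches meet in `W`, then `N` pairs up `W \ {M x}` while `M` pairs up
`W \ {M x, M y}`. -/
theorem apply_notMem_branch_inter [Finite V] {x y : V} (hX : IsMatchedBarrier K M X)
    (hY : IsMatchedBarrier K M Y) (hM : IsMatchingMap K M) (hx : x ∈ X) (hy : y ∈ Y)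
    (hxy : x ≠ y) (hzX : z ∈ X) (hzY : z ∈ Y) (hN : IsMatchingMapOff K z (M x) N)
    (hyx : M y ∈ branch K X (M x)) : M x ∉ branch K Y (M y) := by
  intro hxyY
  have hNX (v) (hv : v ∈ branch K X (M x)) (hne : v ≠ M x) : N v ∈ branch K X (M x) := by
    obtain ⟨w, hw, hxw, hclosed⟩ := hX.exists_branch_closed_off hM hN hzX
    obtain rfl := hX.eq_of_mem_branch w hw x hx hxw
    exact hclosed v hv hne
  have hNY (v) (hv : v ∈ branch K Y (M y)) (hne : v ≠ M x) : N v ∈ branch K Y (M y) := by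
    obtain ⟨w, hw, hxw, hclosed⟩ := hY.exists_branch_closed_off hM hN hzY
    obtain rfl := hY.eq_of_mem_branch w hw y hy (hxw.trans (mem_branch_comm.1 hxyY))
    exact hclosed v hv hne
  set W := branch K X (M x) ∩ branch K Y (M y)
  have hMyW : M y ∈ W \ {M x} := ⟨⟨hyx, mem_branch_self⟩, hM.involutive.injective.ne hxy.symm⟩
  have hnotX (v) (hv : v ∈ W) : v ∉ X := notMem_of_mem_branch (hX.notMem x hx) hv.1
  have hnotY (v) (hv : v ∈ W) : v ∉ Y := notMem_of_mem_branch (hY.notMem y hy) hv.2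
  have hevenN : Even (W \ {M x}).ncard := by
    have hadj (v) (hv : v ∈ W \ {M x}) : K.Adj v (N v) :=
      hN.adj v (fun h => hnotX v hv.1 (h ▸ hzX)) hv.2
    refine even_ncard_of_involutive hN.involutive (fun v hv => ?_) fun v hv => (hadj v hv).ne'
    refine ⟨⟨hNX v hv.1.1 hv.2, hNY v hv.1.2 hv.2⟩, fun h => hnotX v hv.1 ?_⟩
    rwa [hN.involutive.eq_iff.1 h, hN.apply_right]
  have hevenM : Even ((W \ {M x}) \ {M y}).ncard := by
    refine hM.even_ncard fun v ⟨⟨hvW, hvx⟩, hvy⟩ =>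
      ⟨⟨⟨hX.apply_mem_branch hM hx hvW.1 hvx, hY.apply_mem_branch hM hy hvW.2 hvy⟩, fun h => ?_⟩,
        fun h => ?_⟩
    · exact hnotX v hvW (hM.involutive.injective h ▸ hx)
    · exact hnotY v hvW (hM.involutive.injective h ▸ hy)
  rw [← Set.ncard_sdiff_singleton_add_one hMyW] at hevenN
  exact Nat.not_even_iff_odd.2 hevenM.add_one hevenN

end IsMatchedBarrier

end Barriers

section Tutte

variable {V : Type*} {K : SimpleGraph V} {M : V → V} {X U : Set V} {u v : V}

theorem ncard_oddComponents_congr {W : Type*} {G : SimpleGraph V} {H : SimpleGraph W}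
    (e : G ≃g H) : G.oddComponents.ncard = H.oddComponents.ncard := by
  have hodd (C : G.ConnectedComponent) :
      e.connectedComponentEquiv C ∈ H.oddComponents ↔ C ∈ G.oddComponents := by
    rw [Set.mem_ofPred_eq, Set.mem_ofPred_eq, ← Set.ncard_congr' (C.isoEquivSupp e)]
  exact Set.ncard_congr' (e.connectedComponentEquiv.subtypeEquiv fun C => (hodd C).symm)

/-- Deleting vertices from an induced subgraph is again inducing a subgraph. -/
def deleteVertsInduceIso (K : SimpleGraph V) (B : Set V) (Y : Set B) :
    ((⊤ : (K.induce B).Subgraph).deleteVerts Y).coe ≃g K.induce (B \ Subtype.val '' Y) where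
  toFun w := ⟨w.1, w.1.2, by simpa using w.2⟩
  invFun w := ⟨⟨w.1, w.2.1⟩, by simpa [w.2.1] using w.2.2⟩
  map_rel_iff' {a b} := by
    have ha := a.2.2
    have hb := b.2.2
    simp [ha, hb]

theorem IsMatchedBarrier.inter (hX : IsMatchedBarrier K M X) (hM : Function.Involutive M)
    (hMU : ∀ v ∈ U, M v ∈ U) (hKU : ∀ a b, K.Adj a b → a ∈ U ∨ M a = b) :
    IsMatchedBarrier K M (X ∩ U) := by
  refine ⟨fun x hx h => hX.notMem x hx.1 h.1, fun x hx y hy hxy => ?_⟩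
  refine hX.eq_of_mem_branch x hx.1 y hy.1 (branch_induction
    (p := fun v => v ∈ branch K X (M x) ∧ v ∈ U) ⟨mem_branch_self, hMU x hx.2⟩ ?_ _ hxy).1
  rintro a b ha hb hab ⟨hax, haU⟩
  have hbU : b ∈ U := (hKU b a hab.symm).elim id fun h => hM.eq_iff.1 h ▸ hMU a haU
  exact ⟨mem_branch_of_adj hax (fun h => ha ⟨h, haU⟩) (fun h => hb ⟨h, hbU⟩) hab, hbU⟩

variable [Finite V]

theorem exists_ncard_lt_ncard_oddComponents_add_two (huv : u ≠ v)
    (h : ∀ f, ¬ IsMatchingMapOff K u v f) :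
    ∃ X, u ∈ X ∧ v ∈ X ∧ X.ncard < (K.induce Xᶜ).oddComponents.ncard + 2 := by
  have hno : ¬ HasPerfectMatching (K.induce ({u, v} : Set V)ᶜ) := fun hpm =>
    (exists_isMatchingMapOff_of_hasPerfectMatching hpm).elim h
  rw [HasPerfectMatching, tutte] at hno
  push Not at hno
  obtain ⟨Y, hY⟩ := hno
  refine ⟨{u, v} ∪ Subtype.val '' Y, by simp, by simp, ?_⟩
  rw [Set.compl_union, ← Set.sdiff_eq, ← ncard_oddComponents_congr (deleteVertsInduceIso K _ Y)]
  calc ({u, v} ∪ Subtype.val '' Y).ncard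
      ≤ ({u, v} : Set V).ncard + (Subtype.val '' Y).ncard := Set.ncard_union_le _ _
    _ = Y.ncard + 2 := by
      rw [Set.ncard_pair huv, Set.ncard_image_of_injective _ Subtype.val_injective, add_comm]
    _ < _ := Nat.add_lt_add_right hY 2

theorem IsMatchingMap.ncard_le_ncard_oddComponents (hM : IsMatchingMap K M)
    (hX : X.ncard < (K.induce Xᶜ).oddComponents.ncard + 2) :
    X.ncard ≤ (K.induce Xᶜ).oddComponents.ncard := by
  have hV : Even (X.ncard + Nat.card (Xᶜ : Set V)) := by
    rw [Nat.card_coe_set_eq, Set.ncard_add_ncard_compl, ← Set.ncard_univ]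
    exact hM.even_ncard fun _ _ => Set.mem_univ _
  have hparity := (K.induce Xᶜ).odd_ncard_oddComponents
  grind

theorem IsMatchingMap.exists_mem_supp_apply_mem (hM : IsMatchingMap K M)
    {C : (K.induce Xᶜ).ConnectedComponent} (hC : C ∈ (K.induce Xᶜ).oddComponents) :
    ∃ w ∈ C.supp, M w ∈ X := by
  by_contra! hcon
  refine Nat.not_even_iff_odd.2 hC ?_
  rw [← Set.ncard_image_of_injective _ Subtype.val_injective]
  refine hM.even_ncard ?_
  rintro _ ⟨w, hw, rfl⟩
  have hadj : (K.induce Xᶜ).Adj w ⟨M w, hcon w hw⟩ := hM.adj w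
  exact ⟨_, (C.mem_supp_congr_adj hadj).1 hw, rfl⟩

theorem IsMatchingMap.isMatchedBarrier (hM : IsMatchingMap K M)
    (hX : X.ncard ≤ (K.induce Xᶜ).oddComponents.ncard) : IsMatchedBarrier K M X := by
  choose e he_mem he_apply using fun C : (K.induce Xᶜ).oddComponents =>
    hM.exists_mem_supp_apply_mem C.2
  let g (C : (K.induce Xᶜ).oddComponents) : X := ⟨M (e C), he_apply C⟩
  have hinj : Function.Injective g := fun C C' h => by
    have he : e C = e C' := Subtype.ext (hM.involutive.injective (congrArg Subtype.val h))
    exact Subtype.ext ((he_mem C).symm.trans (he ▸ he_mem C'))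
  have hg := hinj.bijective_of_nat_card_le hX
  refine ⟨fun x hx => ?_, fun x hx y hy hxy => ?_⟩
  · obtain ⟨C, hC⟩ := hg.2 ⟨x, hx⟩
    obtain rfl : M (e C) = x := congrArg Subtype.val hC
    rw [hM.involutive]
    exact (e C).2
  · obtain ⟨C, hC⟩ := hg.2 ⟨x, hx⟩
    obtain ⟨C', hC'⟩ := hg.2 ⟨y, hy⟩
    obtain rfl : M (e C) = x := congrArg Subtype.val hC
    obtain rfl : M (e C') = y := congrArg Subtype.val hC'
    rw [hM.involutive, hM.involutive] at hxy
    obtain ⟨w, hw, hwe⟩ : ∃ w ∈ C.1.supp, (w : V) = e C' :=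
      branch_induction (p := fun q => ∃ w ∈ C.1.supp, (w : V) = q) ⟨e C, he_mem C, rfl⟩
        (by
          rintro _ b - hb hab ⟨w, hw, rfl⟩
          have hadj : (K.induce Xᶜ).Adj w ⟨b, hb⟩ := hab
          exact ⟨_, (C.1.mem_supp_congr_adj hadj).1 hw, rfl⟩) _ hxy
    have hCC' : C = C' := Subtype.ext (hw.symm.trans (Subtype.ext hwe ▸ he_mem C'))
    rw [hCC']

end Tutte

section Colorings

variable {V : Type*} {K K' : SimpleGraph V} {M N : V → V} {X Y U : Set V} {col : V → ℕ}
  {a b u v z : V}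

/-- A certificate that `K` is nearly bicritical on `U`: deleting two vertices of `U` of different
colours leaves a perfect matching. Outside `U` the graph `K` consists of edges of the perfect
matching `M` only. -/
structure RemovableColoring (K : SimpleGraph V) (M : V → V) (U : Set V) (col : V → ℕ) : Prop where
  isMatchingMap : IsMatchingMap K M
  apply_mem : ∀ v ∈ U, M v ∈ U
  mem_or_eq : ∀ a b, K.Adj a b → a ∈ U ∨ M a = b
  col_ne : ∀ v ∈ U, col v ≠ col (M v)
  exists_off : ∀ u ∈ U, ∀ v ∈ U, col u ≠ col v → ∃ f, IsMatchingMapOff K u v f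

/-- The quantity that never decreases while a coloured subgraph grows by ears. -/
noncomputable def potential (K : SimpleGraph V) (U : Set V) (col : V → ℕ) : ℤ :=
  U.ncard + (col '' U).ncard - K.edgeSet.ncard

theorem ncard_edgeSet_sup_edge_le [Finite V] (K : SimpleGraph V) (a b : V) :
    (K ⊔ edge a b).edgeSet.ncard ≤ K.edgeSet.ncard + 1 := by
  rw [edgeSet_sup]
  calc (K.edgeSet ∪ (edge a b).edgeSet).ncard
      ≤ K.edgeSet.ncard + (edge a b).edgeSet.ncard := Set.ncard_union_le _ _
    _ ≤ K.edgeSet.ncard + ({s(a, b)} : Set (Sym2 V)).ncard :=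
      Nat.add_le_add_left (Set.ncard_le_ncard edgeSet_edge_subset) _
    _ = K.edgeSet.ncard + 1 := by rw [Set.ncard_singleton]

namespace RemovableColoring

theorem mono (h : RemovableColoring K M U col) (hK : K ≤ K')
    (hU : ∀ a b, K'.Adj a b → a ∈ U ∨ M a = b) : RemovableColoring K' M U col where
  isMatchingMap := h.isMatchingMap.mono hK
  apply_mem := h.apply_mem
  mem_or_eq := hU
  col_ne := h.col_ne
  exists_off u hu v hv huv := (h.exists_off u hu v hv huv).imp fun _ hf => hf.mono hK

variable [Finite V]

theorem col_eq_of_isMatchedBarrier (h : RemovableColoring K M U col)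
    (hX : IsMatchedBarrier K M X) (hXU : X ⊆ U) (hu : u ∈ X) (hv : v ∈ X) : col u = col v := by
  by_contra hne
  obtain ⟨f, hf⟩ := h.exists_off u (hXU hu) v (hXU hv) hne
  exact hX.not_isMatchingMapOff h.isMatchingMap hu hv hf

theorem isMatchedBarrier_union (h : RemovableColoring K M U col) (hX : IsMatchedBarrier K M X)
    (hY : IsMatchedBarrier K M Y) (hXU : X ⊆ U) (hYU : Y ⊆ U) (hzX : z ∈ X) (hzY : z ∈ Y) :
    IsMatchedBarrier K M (X ∪ Y) := by
  have hcol (v) : v ∈ X ∪ Y → col v = col z := by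
    rintro (hv | hv)
    exacts [h.col_eq_of_isMatchedBarrier hX hXU hv hzX, h.col_eq_of_isMatchedBarrier hY hYU hv hzY]
  have hU : X ∪ Y ⊆ U := Set.union_subset hXU hYU
  have hsep {x y} (hx : x ∈ X) (hy : y ∈ Y)
      (hxy : M y ∈ branch K (X ∪ Y) (M x)) : x = y := by
    by_contra hne
    obtain ⟨N, hN⟩ := h.exists_off z (hXU hzX) (M x) (h.apply_mem x (hXU hx))
      (hcol x (.inl hx) ▸ h.col_ne x (hXU hx))
    exact hX.apply_notMem_branch_inter hY h.isMatchingMap hx hy hne hzX hzY hN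
      (branch_mono le_rfl Set.subset_union_left hxy)
      (branch_mono le_rfl Set.subset_union_right (mem_branch_comm.1 hxy))
  refine ⟨fun x hx hMx => h.col_ne x (hU hx) ((hcol x hx).trans (hcol _ hMx).symm), ?_⟩
  rintro x (hx | hx) y (hy | hy) hxy
  · exact hX.eq_of_mem_branch x hx y hy (branch_mono le_rfl Set.subset_union_left hxy)
  · exact hsep hx hy hxy
  · exact (hsep hy hx (mem_branch_comm.1 hxy)).symm
  · exact hY.eq_of_mem_branch x hx y hy (branch_mono le_rfl Set.subset_union_right hxy)

theorem exists_isMatchedBarrier (h : RemovableColoring K M U col) (hu : u ∈ U) (hv : v ∈ U)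
    (huv : u ≠ v) (hoff : ∀ f, ¬ IsMatchingMapOff K u v f) :
    ∃ X ⊆ U, u ∈ X ∧ v ∈ X ∧ IsMatchedBarrier K M X := by
  obtain ⟨X, huX, hvX, hX⟩ := exists_ncard_lt_ncard_oddComponents_add_two huv hoff
  have hM := h.isMatchingMap
  exact ⟨X ∩ U, Set.inter_subset_right, ⟨huX, hu⟩, ⟨hvX, hv⟩,
    (hM.isMatchedBarrier (hM.ncard_le_ncard_oddComponents hX)).inter hM.involutive h.apply_mem
      h.mem_or_eq⟩

theorem exists_maximal_isMatchedBarrier (h : RemovableColoring K M U col) (hu : u ∈ U) :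
    ∃ X ⊆ U, u ∈ X ∧ IsMatchedBarrier K M X ∧
      ∀ x ∈ X, ∀ v ∈ U, v ∉ X → ∃ f, IsMatchingMapOff K x v f := by
  obtain ⟨X, ⟨hXU, huX, hX⟩, hmax⟩ :=
    (Set.toFinite {X | X ⊆ U ∧ u ∈ X ∧ IsMatchedBarrier K M X}).exists_maximal
      ⟨{u}, Set.singleton_subset_iff.2 hu, rfl, isMatchedBarrier_singleton h.isMatchingMap⟩
  refine ⟨X, hXU, huX, hX, fun x hx v hv hvX => ?_⟩
  by_contra! hoff
  obtain ⟨Y, hYU, hxY, hvY, hY⟩ :=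
    h.exists_isMatchedBarrier (hXU hx) hv (fun hxv => hvX (hxv ▸ hx)) hoff
  exact hvX (hmax ⟨Set.union_subset hXU hYU, .inl huX,
    h.isMatchedBarrier_union hX hY hXU hYU hx hxY⟩ Set.subset_union_left (.inr hvY))

theorem isMatchedBarrier_or_exists_finer (h : RemovableColoring K M U col) (hu : u ∈ U) :
    IsMatchedBarrier K M {v ∈ U | col v = col u} ∨
      ∃ col', RemovableColoring K M U col' ∧ (col' '' U).ncard = (col '' U).ncard + 1 := by
  classical
  obtain ⟨X, hXU, huX, hX, hoff⟩ := h.exists_maximal_isMatchedBarrier hu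
  have hXcol (x) (hx : x ∈ X) : col x = col u := h.col_eq_of_isMatchedBarrier hX hXU hx huX
  by_cases hsub : {v ∈ U | col v = col u} ⊆ X
  · left
    rwa [hsub.antisymm fun x hx => ⟨hXU hx, hXcol x hx⟩]
  right
  obtain ⟨v, ⟨hvU, hvcol⟩, hvX⟩ := Set.not_subset.1 hsub
  obtain ⟨k, hk⟩ := (Set.toFinite (col '' U)).exists_notMem
  have hkU (w) (hw : w ∈ U) : col w ≠ k := fun h => hk ⟨w, hw, h⟩
  refine ⟨fun w => if w ∈ X then k else col w, ⟨h.isMatchingMap, h.apply_mem, h.mem_or_eq,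
    fun w hw => ?_, fun x hx y hy hxy => ?_⟩, ?_⟩
  · have := hX.notMem w
    have := h.col_ne w hw
    have := hkU _ (h.apply_mem w hw)
    grind
  · by_cases hxX : x ∈ X <;> by_cases hyX : y ∈ X
    · simp [hxX, hyX] at hxy
    · exact hoff x hxX y hy hyX
    · exact (hoff y hyX x hx hxX).imp fun _ hf => hf.symm
    · exact h.exists_off x hx y hy (by simpa [hxX, hyX] using hxy)
  · rw [← Set.ncard_insert_of_notMem hk]
    congr 1
    ext c
    constructor
    · grind
    · rintro (rfl | ⟨w, hw, rfl⟩)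
      · exact ⟨u, hu, by simp [huX]⟩
      by_cases hwX : w ∈ X
      · exact ⟨v, hvU, by simp [hvX, hXcol w hwX, hvcol]⟩
      · exact ⟨w, hw, by simp [hwX]⟩

/-- The edge to add is one through which a component of `K - S` grows in `K'`, where `S` is the
colour class of `u` and `v`. -/
theorem exists_edge_not_isMatchedBarrier (h : RemovableColoring K M U col) (hK : K ≤ K')
    (hU : ∀ a b, K'.Adj a b → a ∈ U ∨ M a = b) (hu : u ∈ U) (hv : v ∈ U)
    (hcol : col v = col u) (hN : IsMatchingMapOff K' u v N)
    (hS : IsMatchedBarrier K M {w ∈ U | col w = col u}) :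
    ∃ a b, K'.Adj a b ∧ ¬ IsMatchedBarrier (K ⊔ edge a b) M {w ∈ U | col w = col u} := by
  set S := {w ∈ U | col w = col u}
  obtain ⟨x, hx, a, b, haS, hbS, hab, hax, hbx⟩ : ∃ x ∈ S, ∃ a b, a ∉ S ∧ b ∉ S ∧ K'.Adj a b ∧
      a ∈ branch K S (M x) ∧ b ∉ branch K S (M x) := by
    by_contra! hclosed
    refine IsMatchedBarrier.not_isMatchingMapOff (K := K') (X := S)
      ⟨hS.notMem, fun x hx y hy hxy => ?_⟩ (h.isMatchingMap.mono hK) ⟨hu, rfl⟩ ⟨hv, hcol⟩ hN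
    exact hS.eq_of_mem_branch x hx y hy
      (branch_induction (p := (· ∈ branch K S (M x))) mem_branch_self (hclosed x hx) _ hxy)
  refine ⟨a, b, hab, fun hS' => ?_⟩
  have hMab : M a ≠ b := fun hMa => by
    by_cases hne : a = M x
    · exact hbS (hMa ▸ hne ▸ (h.isMatchingMap.involutive x).symm ▸ hx)
    · exact hbx (hMa ▸ hS.apply_mem_branch h.isMatchingMap hx hax hne)
  have hbU : b ∈ U := (hU b a hab.symm).resolve_right fun hMb =>
    hMab (h.isMatchingMap.involutive.eq_iff.1 hMb).symm
  obtain ⟨f, hf⟩ := h.exists_off u hu b hbU fun hub => hbS ⟨hbU, hub.symm⟩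
  obtain ⟨w, hw, hbw, -⟩ := hS.exists_branch_closed_off h.isMatchingMap hf ⟨hu, rfl⟩
  have hwx : M x ∈ branch (K ⊔ edge a b) S (M w) := by
    have haw : a ∈ branch (K ⊔ edge a b) S (M w) :=
      mem_branch_of_adj (branch_mono le_sup_left le_rfl hbw) hbS haS
        (.inr (by simp [edge_adj, hab.ne']))
    exact haw.trans (mem_branch_comm.1 (branch_mono le_sup_left le_rfl hax))
  exact hbx (hS'.eq_of_mem_branch w hw x hx hwx ▸ hbw)

theorem exists_finer_of_isMatchingMapOff (h : RemovableColoring K M U col) (hK : K ≤ K')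
    (hU : ∀ a b, K'.Adj a b → a ∈ U ∨ M a = b) (hu : u ∈ U) (hv : v ∈ U)
    (hcol : col v = col u) (hN : IsMatchingMapOff K' u v N) :
    ∃ K₁ col₁, K ≤ K₁ ∧ K₁ ≤ K' ∧ RemovableColoring K₁ M U col₁ ∧
      potential K U col ≤ potential K₁ U col₁ ∧ (col '' U).ncard < (col₁ '' U).ncard := by
  rcases h.isMatchedBarrier_or_exists_finer hu with hS | ⟨col', h', hcard⟩
  · obtain ⟨a, b, hab, hS'⟩ := h.exists_edge_not_isMatchedBarrier hK hU hu hv hcol hN hS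
    have hle : K ⊔ edge a b ≤ K' := sup_le hK ((edge_le_iff K').2 (.inr hab))
    obtain ⟨col', h', hcard⟩ := ((h.mono le_sup_left fun c d hcd =>
      hU c d (hle hcd)).isMatchedBarrier_or_exists_finer hu).resolve_left hS'
    have := ncard_edgeSet_sup_edge_le K a b
    exact ⟨_, col', le_sup_left, hle, h', by grind [potential], by lia⟩
  · exact ⟨K, col', le_rfl, hK, h', by grind [potential], by lia⟩

theorem exists_closure (h : RemovableColoring K M U col) (hK : K ≤ K')
    (hU : ∀ a b, K'.Adj a b → a ∈ U ∨ M a = b) :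
    ∃ K₁ col₁, K ≤ K₁ ∧ K₁ ≤ K' ∧ RemovableColoring K₁ M U col₁ ∧
      potential K U col ≤ potential K₁ U col₁ ∧
      ∀ u ∈ U, ∀ v ∈ U, (∃ f, IsMatchingMapOff K' u v f) → col₁ u ≠ col₁ v := by
  induction hd : U.ncard - (col '' U).ncard using Nat.strong_induction_on generalizing K col with
  | _ d ih =>
    subst hd
    by_cases hdone : ∀ u ∈ U, ∀ v ∈ U, (∃ f, IsMatchingMapOff K' u v f) → col u ≠ col v
    · exact ⟨K, col, le_rfl, hK, h, le_rfl, hdone⟩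
    push Not at hdone
    obtain ⟨u, hu, v, hv, ⟨f, hf⟩, hcol⟩ := hdone
    obtain ⟨K₁, col₁, hKK₁, hK₁, h₁, hpot, hlt⟩ :=
      h.exists_finer_of_isMatchingMapOff hK hU hu hv hcol.symm hf
    have hle : (col₁ '' U).ncard ≤ U.ncard := Set.ncard_image_le
    obtain ⟨K₂, col₂, hK₁K₂, hK₂, h₂, hpot₂, hcol₂⟩ := ih _ (by lia) h₁ hK₁ rfl
    exact ⟨K₂, col₂, hKK₁.trans hK₁K₂, hK₂, h₂, hpot.trans hpot₂, hcol₂⟩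

end RemovableColoring

end Colorings

section Subdivision

variable {V : Type*} {K K₂ : SimpleGraph V} {M f : V → V} {U : Set V} {col : V → ℕ}
  {a b u v x y : V}

/-- The graph whose edges are the pairs `{v, f v}`. -/
def matchingGraph (f : V → V) : SimpleGraph V :=
  fromRel fun a b => f a = b

theorem IsMatchingMap.matchingGraph_adj (hf : IsMatchingMap K f) :
    (matchingGraph f).Adj a b ↔ f a = b := by
  rw [matchingGraph, fromRel_adj, hf.involutive.eq_iff (x := b), eq_comm (a := b), or_self,
    and_iff_right_iff_imp]
  rintro rfl
  exact (hf.apply_ne a).symm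

theorem IsMatchingMap.isMatchingMap_matchingGraph (hf : IsMatchingMap K f) :
    IsMatchingMap (matchingGraph f) f :=
  ⟨hf.involutive, fun _ => hf.matchingGraph_adj.2 rfl⟩

theorem IsMatchingMap.matchingGraph_le (hf : IsMatchingMap K f) : matchingGraph f ≤ K :=
  fun v _ h => hf.matchingGraph_adj.1 h ▸ hf.adj v

/-- The involution `f` with the roles of `p` and `q` exchanged. -/
def conjSwap [DecidableEq V] (f : V → V) (p q : V) (v : V) : V :=
  Equiv.swap p q (f (Equiv.swap p q v))

theorem conjSwap_involutive [DecidableEq V] (hf : Function.Involutive f) (p q : V) :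
    Function.Involutive (conjSwap f p q) := fun v => by
  simp only [conjSwap, Equiv.swap_apply_self, hf (Equiv.swap p q v)]

theorem conjSwap_ne [DecidableEq V] (hf : ∀ v, f v ≠ v) (p q v : V) : conjSwap f p q v ≠ v :=
  fun h => hf (Equiv.swap p q v) (by rw [← Equiv.swap_apply_self p q (f _), ← conjSwap, h])

theorem conjSwap_comm [DecidableEq V] (f : V → V) (p q : V) : conjSwap f p q = conjSwap f q p := by
  funext v
  rw [conjSwap, conjSwap, Equiv.swap_comm]

theorem conjSwap_apply_of_ne [DecidableEq V] {p q : V} (hp : v ≠ p) (hq : v ≠ q)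
    (hfp : f v ≠ p) (hfq : f v ≠ q) : conjSwap f p q v = f v := by
  rw [conjSwap, Equiv.swap_apply_of_ne_of_ne hp hq, Equiv.swap_apply_of_ne_of_ne hfp hfq]

theorem conjSwap_apply_of_apply_eq_left [DecidableEq V] {p q : V} (hf : f v = p) (hp : v ≠ p)
    (hq : v ≠ q) : conjSwap f p q v = q := by
  rw [conjSwap, Equiv.swap_apply_of_ne_of_ne hp hq, hf, Equiv.swap_apply_left]

theorem conjSwap_apply_of_apply_eq_right [DecidableEq V] {p q : V} (hf : f v = q) (hp : v ≠ p)
    (hq : v ≠ q) : conjSwap f p q v = p := by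
  rw [conjSwap_comm, conjSwap_apply_of_apply_eq_left hf hq hp]

/-- In a perfect matching containing `ab`, the edge `xy` is replaced by the path `x, a, b, y`. -/
theorem IsMatchingMapOff.exists_of_subdivide (hf : IsMatchingMapOff K u v f)
    (hK : ∀ p q, K.Adj p q → s(p, q) ≠ s(x, y) → K₂.Adj p q) (hxa : K₂.Adj x a)
    (hby : K₂.Adj b y) (hab : f a = b) (hau : a ≠ u) (hav : a ≠ v) (hay : a ≠ y) (hbx : b ≠ x)
    (hba : b ≠ a) (hxy : x ≠ y) : ∃ g, IsMatchingMapOff K₂ u v g := by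
  classical
  have hinv := hf.involutive
  by_cases hf_xy : f x = y ∧ x ≠ u ∧ x ≠ v
  · obtain ⟨hf_xy, hxu, hxv⟩ := hf_xy
    have hf_b : f b = a := hab ▸ hinv a
    have hginv := conjSwap_involutive hinv a y
    have hgx : conjSwap f a y x = a := conjSwap_apply_of_apply_eq_right hf_xy hxa.ne hxy
    have hgb : conjSwap f a y b = y := conjSwap_apply_of_apply_eq_left hf_b hba hby.ne
    have hga : conjSwap f a y a = x := (hginv.eq_iff.1 hgx).symm
    have hgy : conjSwap f a y y = b := (hginv.eq_iff.1 hgb).symm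
    have hg (w) (hwa : w ≠ a) (hwb : w ≠ b) (hwx : w ≠ x) (hwy : w ≠ y) :
        conjSwap f a y w = f w :=
      conjSwap_apply_of_ne hwa hwy (fun h => hwb (by rw [← hab, ← h, hinv]))
        (fun h => hwx (hinv.injective (h.trans hf_xy.symm)))
    have hf_u : f u = v := hf.apply_left
    have hf_y : f y = x := hf_xy ▸ hinv x
    refine ⟨conjSwap f a y, hginv, ?_, fun w hwu hwv => ?_⟩
    · rw [hg u hau.symm (by grind) hxu.symm (by grind), hf_u]
    by_cases hw : w = x ∨ w = a ∨ w = b ∨ w = y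
    · rcases hw with rfl | rfl | rfl | rfl
      · rwa [hgx]
      · rw [hga]
        exact hxa.symm
      · rwa [hgb]
      · rw [hgy]
        exact hby.symm
    · push Not at hw
      rw [hg w hw.2.1 hw.2.2.1 hw.1 hw.2.2.2]
      refine hK w (f w) (hf.adj w hwu hwv) fun h => ?_
      rcases Sym2.eq_iff.1 h with h | h
      exacts [hw.1 h.1, hw.2.2.2 h.1]
  · refine ⟨f, hinv, hf.apply_left, fun w hwu hwv => hK _ _ (hf.adj w hwu hwv) fun h => hf_xy ?_⟩
    rcases Sym2.eq_iff.1 h with ⟨rfl, hfw⟩ | ⟨rfl, hfw⟩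
    · exact ⟨hfw, hwu, hwv⟩
    · have hfx : f x = w := (hinv.eq_iff.1 hfw).symm
      refine ⟨hfx, fun hxu => hwv ?_, fun hxv => hwu ?_⟩
      · rw [← hfx, hxu, hf.apply_left]
      · rw [← hfx, hxv, hf.apply_right]

/-- A perfect matching of `K - y - v` containing `ab` gives one of `K₂ - a - v` containing `by`. -/
theorem IsMatchingMapOff.exists_of_subdivide_end (hf : IsMatchingMapOff K y v f)
    (hK : ∀ p q, K.Adj p q → s(p, q) ≠ s(x, y) → K₂.Adj p q)
    (hby : K₂.Adj b y) (hab : f a = b) (hav : a ≠ v) (hba : b ≠ a) (hyv : y ≠ v) :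
    ∃ g, IsMatchingMapOff K₂ a v g := by
  classical
  have hinv := hf.involutive
  have hginv := conjSwap_involutive hinv a y
  have hgb : conjSwap f a y b = y := conjSwap_apply_of_apply_eq_left (hab ▸ hinv a) hba hby.ne
  have hgy : conjSwap f a y y = b := (hginv.eq_iff.1 hgb).symm
  refine ⟨conjSwap f a y, hginv, ?_, fun w hwa hwv => ?_⟩
  · rw [conjSwap, Equiv.swap_apply_left, hf.apply_left,
      Equiv.swap_apply_of_ne_of_ne hav.symm hyv.symm]
  by_cases hwy : w = y
  · rw [hwy, hgy]
    exact hby.symm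
  by_cases hwb : w = b
  · rwa [hwb, hgb]
  have hfwa : f w ≠ a := fun h => hwb (by rw [← hab, ← h, hinv])
  have hfwy : f w ≠ y := fun h => hwv (by rw [← hf.apply_left, ← h, hinv])
  rw [conjSwap_apply_of_ne hwa hwy hfwa hfwy]
  refine hK w (f w) (hf.adj w hwy hwv) fun h => ?_
  rcases Sym2.eq_iff.1 h with h | h
  exacts [hfwy h.2, hwy h.1]

/-- The graph `K` with the edge `xy` subdivided into the path `x, a, M a, y`; an edge `xy` of the
perfect matching `M` is kept. -/
def subdivision (K : SimpleGraph V) (M : V → V) (x y a : V) : SimpleGraph V :=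
  K \ edge x y ⊔ matchingGraph M ⊔ edge x a ⊔ edge (M a) y

theorem subdivision_adj_of_adj (h : K.Adj u v) (hne : s(u, v) ≠ s(x, y)) :
    (subdivision K M x y a).Adj u v :=
  .inl (.inl (.inl ⟨h, fun h' => hne (Sym2.eq_iff.2 ((edge_adj ..).1 h').1)⟩))

theorem matchingGraph_le_subdivision : matchingGraph M ≤ subdivision K M x y a :=
  fun _ _ h => .inl (.inl (.inr h))

theorem subdivision_adj_left (h : x ≠ a) : (subdivision K M x y a).Adj x a :=
  .inl (.inr (by simp [edge_adj, h]))

theorem subdivision_adj_right (h : M a ≠ y) : (subdivision K M x y a).Adj (M a) y :=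
  .inr (by simp [edge_adj, h])

theorem subdivision_le (hM : IsMatchingMap K M) :
    subdivision K M x y a ≤ K ⊔ edge x a ⊔ edge (M a) y :=
  sup_le_sup_right (sup_le_sup_right (sup_le sdiff_le hM.matchingGraph_le) _) _

theorem ncard_edgeSet_subdivision_le [Finite V] (hM : IsMatchingMap K M) :
    (subdivision K M x y a).edgeSet.ncard ≤ K.edgeSet.ncard + 2 :=
  calc (subdivision K M x y a).edgeSet.ncard
      ≤ (K ⊔ edge x a ⊔ edge (M a) y).edgeSet.ncard :=
        Set.ncard_le_ncard (edgeSet_mono (subdivision_le hM))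
    _ ≤ (K ⊔ edge x a).edgeSet.ncard + 1 := ncard_edgeSet_sup_edge_le _ _ _
    _ ≤ K.edgeSet.ncard + 2 := Nat.succ_le_succ (ncard_edgeSet_sup_edge_le _ _ _)

theorem ncard_edgeSet_subdivision_le_of_adj [Finite V] (hM : IsMatchingMap K M)
    (hxy : K.Adj x y) (hne : M x ≠ y) :
    (subdivision K M x y a).edgeSet.ncard ≤ K.edgeSet.ncard + 1 := by
  have hM' : IsMatchingMap (K \ edge x y) M := ⟨hM.involutive, fun v => ⟨hM.adj v, fun h => by
    rcases ((edge_adj ..).1 h).1 with ⟨rfl, hv⟩ | ⟨rfl, hv⟩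
    exacts [hne hv, hne (hM.involutive.eq_iff.1 hv).symm]⟩⟩
  have hcard : (K \ edge x y).edgeSet.ncard + 1 = K.edgeSet.ncard := by
    rw [edgeSet_sdiff, edgeSet_edge_of_ne hxy.ne]
    exact Set.ncard_sdiff_singleton_add_one hxy
  have hle : subdivision K M x y a ≤ K \ edge x y ⊔ edge x a ⊔ edge (M a) y :=
    sup_le_sup_right (sup_le_sup_right (sup_le le_rfl hM'.matchingGraph_le) _) _
  calc (subdivision K M x y a).edgeSet.ncard
      ≤ (K \ edge x y ⊔ edge x a ⊔ edge (M a) y).edgeSet.ncard :=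
        Set.ncard_le_ncard (edgeSet_mono hle)
    _ ≤ (K \ edge x y ⊔ edge x a).edgeSet.ncard + 1 := ncard_edgeSet_sup_edge_le _ _ _
    _ ≤ (K \ edge x y).edgeSet.ncard + 1 + 1 :=
      Nat.succ_le_succ (ncard_edgeSet_sup_edge_le _ _ _)
    _ = K.edgeSet.ncard + 1 := by rw [hcard]

/-- The colouring of a subdivision in which each of the two new vertices gets the colour of the end
of the subdivided edge that is not its neighbour. -/
def subdivisionColoring [DecidableEq V] (col : V → ℕ) (M : V → V) (x y a : V) : V → ℕ :=
  Function.update (Function.update col a (col y)) (M a) (col x)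

theorem subdivisionColoring_apply_left [DecidableEq V] (h : M a ≠ a) :
    subdivisionColoring col M x y a a = col y := by
  rw [subdivisionColoring, Function.update_of_ne h.symm, Function.update_self]

theorem subdivisionColoring_apply_right [DecidableEq V] :
    subdivisionColoring col M x y a (M a) = col x :=
  Function.update_self ..

theorem subdivisionColoring_apply_of_ne [DecidableEq V] (ha : v ≠ a) (hMa : v ≠ M a) :
    subdivisionColoring col M x y a v = col v := by
  rw [subdivisionColoring, Function.update_of_ne hMa, Function.update_of_ne ha]

namespace RemovableColoring

theorem apply_eq_of_isMatchingMapOff (h : RemovableColoring K M U col) (ha : a ∉ U)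
    (hf : IsMatchingMapOff K u v f) (hau : a ≠ u) (hav : a ≠ v) : f a = M a :=
  ((h.mem_or_eq a (f a) (hf.adj a hau hav)).resolve_left ha).symm

theorem apply_notMem (h : RemovableColoring K M U col) (ha : a ∉ U) : M a ∉ U := fun hMa =>
  ha (h.isMatchingMap.involutive a ▸ h.apply_mem _ hMa)

theorem exists_off_subdivision (h : RemovableColoring K M U col) (hx : x ∈ U) (hy : y ∈ U)
    (hxy : x ≠ y) (ha : a ∉ U) (hu : u ∈ U) (hv : v ∈ U) (huv : col u ≠ col v) :
    ∃ f, IsMatchingMapOff (subdivision K M x y a) u v f := by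
  have hMa := h.apply_notMem ha
  obtain ⟨f, hf⟩ := h.exists_off u hu v hv huv
  have hau : a ≠ u := (ne_of_mem_of_not_mem hu ha).symm
  have hav : a ≠ v := (ne_of_mem_of_not_mem hv ha).symm
  exact hf.exists_of_subdivide (fun _ _ => subdivision_adj_of_adj)
    (subdivision_adj_left (ne_of_mem_of_not_mem hx ha))
    (subdivision_adj_right (ne_of_mem_of_not_mem hy hMa).symm)
    (h.apply_eq_of_isMatchingMapOff ha hf hau hav) hau hav (ne_of_mem_of_not_mem hy ha).symm
    (ne_of_mem_of_not_mem hx hMa).symm (h.isMatchingMap.apply_ne a) hxy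

theorem exists_off_subdivision_left (h : RemovableColoring K M U col) (hy : y ∈ U) (ha : a ∉ U)
    (hv : v ∈ U) (hyv : col y ≠ col v) :
    ∃ f, IsMatchingMapOff (subdivision K M x y a) a v f := by
  obtain ⟨f, hf⟩ := h.exists_off y hy v hv hyv
  have hay : a ≠ y := (ne_of_mem_of_not_mem hy ha).symm
  have hav : a ≠ v := (ne_of_mem_of_not_mem hv ha).symm
  exact hf.exists_of_subdivide_end (fun _ _ => subdivision_adj_of_adj)
    (subdivision_adj_right (ne_of_mem_of_not_mem hy (h.apply_notMem ha)).symm)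
    (h.apply_eq_of_isMatchingMapOff ha hf hay hav) hav (h.isMatchingMap.apply_ne a)
    (ne_of_apply_ne col hyv)

theorem exists_off_subdivision_right (h : RemovableColoring K M U col) (hx : x ∈ U) (ha : a ∉ U)
    (hv : v ∈ U) (hxv : col x ≠ col v) :
    ∃ f, IsMatchingMapOff (subdivision K M x y a) (M a) v f := by
  have hM := h.isMatchingMap
  have : subdivision K M x y a = subdivision K M y x (M a) := by
    rw [subdivision, subdivision, hM.involutive, edge_comm y x, edge_comm y, edge_comm a,
      sup_right_comm]
  rw [this]
  exact h.exists_off_subdivision_left hx (h.apply_notMem ha) hv hxv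

variable [DecidableEq V]

theorem subdivide (h : RemovableColoring K M U col) (hx : x ∈ U) (hy : y ∈ U)
    (hxy : col x ≠ col y) (ha : a ∉ U) :
    RemovableColoring (subdivision K M x y a) M (insert a (insert (M a) U))
      (subdivisionColoring col M x y a) := by
  have hM := h.isMatchingMap
  have hMa := h.apply_notMem ha
  have hinv : M (M a) = a := hM.involutive a
  have hne : M a ≠ a := hM.apply_ne a
  have hcol_a : subdivisionColoring col M x y a a = col y := subdivisionColoring_apply_left hne
  have hcol_Ma : subdivisionColoring col M x y a (M a) = col x := subdivisionColoring_apply_right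
  have hcol (v) (hv : v ∈ U) : subdivisionColoring col M x y a v = col v :=
    subdivisionColoring_apply_of_ne (ne_of_mem_of_not_mem hv ha) (ne_of_mem_of_not_mem hv hMa)
  have hM' := hM.isMatchingMap_matchingGraph.mono
    (matchingGraph_le_subdivision (K := K) (x := x) (y := y) (a := a))
  refine ⟨hM', ?_, fun p q hpq => ?_, ?_, ?_⟩
  · rintro v (rfl | rfl | hv)
    exacts [.inr (.inl rfl), .inl hinv, .inr (.inr (h.apply_mem v hv))]
  · have := h.mem_or_eq p q
    have := subdivision_le hM hpq
    simp only [sup_adj, edge_adj] at this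
    grind
  · rintro v (rfl | rfl | hv)
    · rwa [hcol_a, hcol_Ma, ne_comm]
    · rwa [hinv, hcol_a, hcol_Ma]
    · rw [hcol v hv, hcol _ (h.apply_mem v hv)]
      exact h.col_ne v hv
  · rintro u (rfl | rfl | hu) v (rfl | rfl | hv) huv
    · exact absurd rfl huv
    · exact ⟨M, hM'.isMatchingMapOff _⟩
    · exact h.exists_off_subdivision_left hy ha hv (by rwa [hcol_a, hcol v hv] at huv)
    · exact ⟨M, (hM'.isMatchingMapOff _).symm⟩
    · exact absurd rfl huv
    · exact h.exists_off_subdivision_right hx ha hv (by rwa [hcol_Ma, hcol v hv] at huv)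
    · rw [hcol_a, hcol u hu, ne_comm] at huv
      exact (h.exists_off_subdivision_left hy ha hu huv).imp fun _ hf => hf.symm
    · rw [hcol_Ma, hcol u hu, ne_comm] at huv
      exact (h.exists_off_subdivision_right hx ha hu huv).imp fun _ hf => hf.symm
    · rw [hcol u hu, hcol v hv] at huv
      exact h.exists_off_subdivision hx hy (ne_of_apply_ne col hxy) ha hu hv huv

theorem potential_subdivide [Finite V] (h : RemovableColoring K M U col) (hx : x ∈ U) (hy : y ∈ U)
    (ha : a ∉ U) (K' : SimpleGraph V) :
    potential K' (insert a (insert (M a) U)) (subdivisionColoring col M x y a) =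
      U.ncard + 2 + (col '' U).ncard - K'.edgeSet.ncard := by
  have hMa := h.apply_notMem ha
  have hne : M a ≠ a := h.isMatchingMap.apply_ne a
  have hcard : (insert a (insert (M a) U)).ncard = U.ncard + 2 := by
    rw [Set.ncard_insert_of_notMem (by simp [hne.symm, ha]), Set.ncard_insert_of_notMem hMa]
  have himage : subdivisionColoring col M x y a '' insert a (insert (M a) U) = col '' U := by
    have hU : subdivisionColoring col M x y a '' U = col '' U := Set.image_congr fun v hv =>
      subdivisionColoring_apply_of_ne (ne_of_mem_of_not_mem hv ha) (ne_of_mem_of_not_mem hv hMa)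
    rw [Set.image_insert_eq, Set.image_insert_eq, hU, subdivisionColoring_apply_left hne,
      subdivisionColoring_apply_right,
      Set.insert_eq_of_mem (Set.mem_image_of_mem col hx),
      Set.insert_eq_of_mem (Set.mem_image_of_mem col hy)]
  rw [potential, hcard, himage]
  push_cast
  rfl

theorem potential_le_potential_subdivide [Finite V] (h : RemovableColoring K M U col) (hx : x ∈ U)
    (hy : y ∈ U) (ha : a ∉ U) :
    potential K U col ≤ potential (subdivision K M x y a) (insert a (insert (M a) U))
      (subdivisionColoring col M x y a) := by
  have := ncard_edgeSet_subdivision_le (x := x) (y := y) (a := a) h.isMatchingMap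
  rw [h.potential_subdivide hx hy ha, potential]
  lia

theorem potential_lt_potential_subdivide [Finite V] (h : RemovableColoring K M U col) (hx : x ∈ U)
    (hy : y ∈ U) (ha : a ∉ U) (hxy : K.Adj x y) (hM : M x ≠ y) :
    potential K U col < potential (subdivision K M x y a) (insert a (insert (M a) U))
      (subdivisionColoring col M x y a) := by
  have := ncard_edgeSet_subdivision_le_of_adj (a := a) h.isMatchingMap hxy hM
  rw [h.potential_subdivide hx hy ha, potential]
  lia

end RemovableColoring

end Subdivision

section Ears

variable {V : Type*} {H K K₁ : SimpleGraph V} {M N : V → V} {U U₁ : Set V} {col col₁ : V → ℕ}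
  {a u₀ v x y : V}

theorem RemovableColoring.mem_of_adj (h : RemovableColoring K M U col) (hx : x ∈ U)
    (hxy : K.Adj x y) : y ∈ U :=
  (h.mem_or_eq y x hxy.symm).elim id fun hyx =>
    h.isMatchingMap.involutive.eq_iff.1 hyx ▸ h.apply_mem x hx

section Rematch

variable [DecidableEq V]

/-- The perfect matching `N` with `a` and `M a` matched to each other, and so their former partners
matched to each other as well. -/
def rematch (N M : V → V) (a : V) : V → V :=
  conjSwap N a (N (M a))

theorem isMatchingMap_rematch (hN : IsMatchingMap ⊤ N) (M : V → V) (a : V) :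
    IsMatchingMap ⊤ (rematch N M a) :=
  ⟨conjSwap_involutive hN.involutive _ _, fun v => (conjSwap_ne hN.apply_ne _ _ v).symm⟩

theorem rematch_apply_apply (hN : IsMatchingMap ⊤ N) (hM : IsMatchingMap H M) :
    rematch N M a (N a) = N (M a) :=
  conjSwap_apply_of_apply_eq_left (hN.involutive a) (hN.apply_ne a)
    (hN.involutive.injective.ne (hM.apply_ne a).symm)

theorem rematch_apply_self (hN : IsMatchingMap ⊤ N) (hM : IsMatchingMap H M) :
    rematch N M a a = M a := by
  rw [rematch, conjSwap, Equiv.swap_apply_left, hN.involutive,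
    Equiv.swap_apply_of_ne_of_ne (hM.apply_ne a) (hN.apply_ne _).symm]

theorem rematch_apply_of_ne (hN : IsMatchingMap ⊤ N) (ha : v ≠ a) (hMa : v ≠ M a) (hNa : v ≠ N a)
    (hNMa : v ≠ N (M a)) : rematch N M a v = N v :=
  conjSwap_apply_of_ne ha hNMa (fun h => hNa (hN.involutive.eq_iff.1 h))
    (hN.involutive.injective.ne hMa)

theorem rematch_apply_cases (hN : IsMatchingMap ⊤ N) (hM : IsMatchingMap H M) (a v : V) :
    rematch N M a v = M v ∨ rematch N M a v = N v ∨ v = N a ∧ rematch N M a v = N (M a) ∨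
      v = N (M a) ∧ rematch N M a v = N a := by
  have hinv := (isMatchingMap_rematch hN M a).involutive
  have hself := rematch_apply_self (a := a) hN hM
  have hswap := rematch_apply_apply (a := a) hN hM
  by_cases ha : v = a
  · exact .inl (ha ▸ hself)
  by_cases hMa : v = M a
  · exact .inl (by rw [hMa, ← hinv.eq_iff.1 hself, hM.involutive])
  by_cases hNa : v = N a
  · exact .inr (.inr (.inl ⟨hNa, hNa ▸ hswap⟩))
  by_cases hNMa : v = N (M a)
  · exact .inr (.inr (.inr ⟨hNMa, hNMa ▸ (hinv.eq_iff.1 hswap).symm⟩))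
  · exact .inr (.inl (rematch_apply_of_ne hN ha hMa hNa hNMa))

theorem ne_of_rematch_ne (hN : IsMatchingMap ⊤ N) (hM : IsMatchingMap H M) (ha : N a ≠ M a)
    (hv : rematch N M a v ≠ M v) : N v ≠ M v := by
  rcases rematch_apply_cases hN hM a v with h | h | ⟨rfl, -⟩ | ⟨rfl, -⟩
  · exact absurd h hv
  · rwa [h] at hv
  · rw [hN.involutive]
    exact fun h => ha (hM.involutive.eq_iff.1 h.symm)
  · rw [hN.involutive]
    exact fun h => ha (hN.involutive.eq_iff.1 (hM.involutive.injective h).symm).symm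

theorem ncard_rematch_ne_lt [Finite V] (hN : IsMatchingMap ⊤ N) (hM : IsMatchingMap H M)
    (ha : a ∉ U) (haN : N a ≠ M a) :
    {v | v ∉ U ∧ rematch N M a v ≠ M v}.ncard < {v | v ∉ U ∧ N v ≠ M v}.ncard :=
  Set.ncard_lt_ncard ⟨fun _ hv => ⟨hv.1, ne_of_rematch_ne hN hM haN hv.2⟩,
    fun hsub => (hsub ⟨ha, haN⟩).2 (rematch_apply_self hN hM)⟩

theorem matchingGraph_rematch_le (hN : IsMatchingMap ⊤ N) (hM : IsMatchingMap H M) :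
    matchingGraph (rematch N M a) ≤ H ⊔ matchingGraph N ⊔ edge (N a) (N (M a)) := by
  intro p q hpq
  have hne := hpq.ne
  obtain rfl := (isMatchingMap_rematch hN M a).matchingGraph_adj.1 hpq
  rcases rematch_apply_cases hN hM a p with h | h | h | h
  · exact .inl (.inl (h ▸ hM.adj p))
  · exact .inl (.inr (hN.matchingGraph_adj.2 h.symm))
  · exact .inr ((edge_adj ..).2 ⟨.inl h, hne⟩)
  · exact .inr ((edge_adj ..).2 ⟨.inr h, hne⟩)

/-- A coloured subgraph on `U₁ ⊇ U` obtained from `U` in the graph `H` by adding ears that alternate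
between `M` and `N`, one of which starts with the edge `u₀ (N u₀)`. -/
structure IsEarExtension (H : SimpleGraph V) (M N : V → V) (U : Set V) (u₀ : V)
    (K₁ : SimpleGraph V) (U₁ : Set V) (col₁ : V → ℕ) : Prop where
  removableColoring : RemovableColoring K₁ M U₁ col₁
  subset : U ⊆ U₁
  apply_ne : ∀ v ∈ U₁, v ∉ U → N v ≠ M v
  le : K₁ ≤ H ⊔ matchingGraph N
  adj : K₁.Adj u₀ (N u₀)
  col_ne : ∀ v ∈ U₁, K₁.Adj v (N v) → col₁ v ≠ col₁ (N v)

namespace IsEarExtension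

theorem notMem (hE : IsEarExtension H M (rematch N M a) U u₀ K₁ U₁ col₁) (hN : IsMatchingMap ⊤ N)
    (hM : IsMatchingMap H M) (ha : a ∉ U) : a ∉ U₁ :=
  fun h => hE.apply_ne a h ha (rematch_apply_self hN hM)

theorem le_sup_edge (hE : IsEarExtension H M (rematch N M a) U u₀ K₁ U₁ col₁)
    (hN : IsMatchingMap ⊤ N) (hM : IsMatchingMap H M) :
    K₁ ≤ H ⊔ matchingGraph N ⊔ edge (N a) (N (M a)) :=
  hE.le.trans (sup_le (le_sup_left.trans le_sup_left) (matchingGraph_rematch_le hN hM))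

theorem of_rematch (hE : IsEarExtension H M (rematch N M a) U u₀ K₁ U₁ col₁)
    (hN : IsMatchingMap ⊤ N) (hM : IsMatchingMap H M) (ha : a ∉ U) (haN : N a ≠ M a)
    (hu₀ : rematch N M a u₀ = N u₀) (hxy : N a ∈ U₁ → ¬ K₁.Adj (N a) (N (M a))) :
    IsEarExtension H M N U u₀ K₁ U₁ col₁ where
  removableColoring := hE.removableColoring
  subset := hE.subset
  apply_ne v hv hvU := ne_of_rematch_ne hN hM haN (hE.apply_ne v hv hvU)
  le p q hpq := by
    have hH (h : K₁.Adj (N a) (N (M a))) : H.Adj (N a) (N (M a)) :=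
      (hE.removableColoring.mem_or_eq _ _ h).resolve_left (fun hx => hxy hx h) ▸ hM.adj _
    rcases hE.le_sup_edge hN hM hpq with h | h
    · exact h
    · rcases ((edge_adj ..).1 h).1 with ⟨rfl, rfl⟩ | ⟨rfl, rfl⟩
      exacts [.inl (hH hpq), .inl (hH hpq.symm).symm]
  adj := hu₀ ▸ hE.adj
  col_ne v hv hadj := by
    have hNv := hE.removableColoring.mem_of_adj hv hadj
    have ha₁ := hE.notMem hN hM ha
    have hMa₁ := hE.removableColoring.apply_notMem ha₁
    have hRv : rematch N M a v = N v :=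
      rematch_apply_of_ne hN (ne_of_mem_of_not_mem hv ha₁) (ne_of_mem_of_not_mem hv hMa₁)
        (fun h => ne_of_mem_of_not_mem hNv ha₁ (hN.involutive.eq_iff.2 h))
        (fun h => ne_of_mem_of_not_mem hNv hMa₁ (hN.involutive.eq_iff.2 h))
    exact hRv ▸ hE.col_ne v hv (hRv ▸ hadj)

theorem subdivision_le_sup (hE : IsEarExtension H M (rematch N M a) U u₀ K₁ U₁ col₁)
    (hN : IsMatchingMap ⊤ N) (hM : IsMatchingMap H M) :
    subdivision K₁ M (N a) (N (M a)) a ≤ H ⊔ matchingGraph N := by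
  have hNadj (v) : (H ⊔ matchingGraph N).Adj v (N v) := .inr (hN.matchingGraph_adj.2 rfl)
  refine sup_le (sup_le (sup_le ?_ (hM.matchingGraph_le.trans le_sup_left)) ?_) ?_
  · exact sdiff_le_iff'.2 (hE.le_sup_edge hN hM)
  · exact (edge_le_iff _).2 (.inr (hNadj a).symm)
  · exact (edge_le_iff _).2 (.inr (hNadj (M a)))

theorem subdivision_adj (hE : IsEarExtension H M (rematch N M a) U u₀ K₁ U₁ col₁)
    (hN : IsMatchingMap ⊤ N) (hM : IsMatchingMap H M) (ha : a ∉ U) (hu₀ : u₀ ∈ U) :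
    (subdivision K₁ M (N a) (N (M a)) a).Adj u₀ (N u₀) := by
  have ha₁ := hE.notMem hN hM ha
  have hMa₁ := hE.removableColoring.apply_notMem ha₁
  by_cases hux : u₀ = N a
  · rw [hux, hN.involutive]
    exact subdivision_adj_left (hN.apply_ne a)
  by_cases huy : u₀ = N (M a)
  · rw [huy, hN.involutive]
    exact (subdivision_adj_right (hN.apply_ne _).symm).symm
  · have hRu₀ : rematch N M a u₀ = N u₀ := rematch_apply_of_ne hN
      (ne_of_mem_of_not_mem (hE.subset hu₀) ha₁) (ne_of_mem_of_not_mem (hE.subset hu₀) hMa₁) hux huy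
    refine subdivision_adj_of_adj (hRu₀ ▸ hE.adj) fun h => ?_
    rcases Sym2.eq_iff.1 h with h | h
    exacts [hux h.1, huy h.1]

theorem subdivisionColoring_ne (hE : IsEarExtension H M (rematch N M a) U u₀ K₁ U₁ col₁)
    (hN : IsMatchingMap ⊤ N) (hM : IsMatchingMap H M) (ha : a ∉ U) (hx : N a ∈ U₁)
    (hxy : K₁.Adj (N a) (N (M a))) (hv : v ∈ insert a (insert (M a) U₁))
    (hadj : (subdivision K₁ M (N a) (N (M a)) a).Adj v (N v)) :
    subdivisionColoring col₁ M (N a) (N (M a)) a v ≠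
      subdivisionColoring col₁ M (N a) (N (M a)) a (N v) := by
  have ha₁ := hE.notMem hN hM ha
  have hMa₁ := hE.removableColoring.apply_notMem ha₁
  have hR := rematch_apply_apply (a := a) hN hM
  have hcol : col₁ (N a) ≠ col₁ (N (M a)) := hR ▸ hE.col_ne _ hx (hR.symm ▸ hxy)
  have hcol_a := subdivisionColoring_apply_left (col := col₁) (x := N a) (y := N (M a))
    (hM.apply_ne a)
  have hcol_of_mem {w} (hw : w ∈ U₁) :
      subdivisionColoring col₁ M (N a) (N (M a)) a w = col₁ w :=
    subdivisionColoring_apply_of_ne (ne_of_mem_of_not_mem hw ha₁) (ne_of_mem_of_not_mem hw hMa₁)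
  have hcol_y := hcol_of_mem (hE.removableColoring.mem_of_adj hx hxy)
  rcases hv with rfl | rfl | hv
  · rw [hcol_a, hcol_of_mem hx]
    exact hcol.symm
  · rw [subdivisionColoring_apply_right, hcol_y]
    exact hcol
  by_cases hvx : v = N a
  · rw [hvx, hN.involutive, hcol_a, hcol_of_mem hx]
    exact hcol
  by_cases hvy : v = N (M a)
  · rw [hvy, hN.involutive, subdivisionColoring_apply_right, hcol_y]
    exact hcol.symm
  have hva := ne_of_mem_of_not_mem hv ha₁
  have hvMa := ne_of_mem_of_not_mem hv hMa₁
  have hadj₁ : K₁.Adj v (N v) := by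
    have := subdivision_le hE.removableColoring.isMatchingMap hadj
    simpa only [sup_adj, edge_adj, hvx, hva, hvMa, hvy, false_and, or_false] using this
  have hRv : rematch N M a v = N v := rematch_apply_of_ne hN hva hvMa hvx hvy
  rw [hcol_of_mem hv, hcol_of_mem (hE.removableColoring.mem_of_adj hv hadj₁)]
  exact hRv ▸ hE.col_ne v hv (hRv ▸ hadj₁)

theorem subdivide (hE : IsEarExtension H M (rematch N M a) U u₀ K₁ U₁ col₁)
    (hN : IsMatchingMap ⊤ N) (hM : IsMatchingMap H M) (ha : a ∉ U) (haN : N a ≠ M a)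
    (hu₀ : u₀ ∈ U) (hx : N a ∈ U₁) (hxy : K₁.Adj (N a) (N (M a))) :
    IsEarExtension H M N U u₀ (subdivision K₁ M (N a) (N (M a)) a) (insert a (insert (M a) U₁))
      (subdivisionColoring col₁ M (N a) (N (M a)) a) where
  removableColoring := by
    have hR := rematch_apply_apply (a := a) hN hM
    exact hE.removableColoring.subdivide hx (hE.removableColoring.mem_of_adj hx hxy)
      (hR ▸ hE.col_ne _ hx (hR.symm ▸ hxy)) (hE.notMem hN hM ha)
  subset := hE.subset.trans ((Set.subset_insert _ _).trans (Set.subset_insert _ _))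
  apply_ne := by
    rintro v (rfl | rfl | hv) hvU
    · exact haN
    · rw [hM.involutive]
      exact fun h => haN (hN.involutive.eq_iff.1 h).symm
    · exact ne_of_rematch_ne hN hM haN (hE.apply_ne v hv hvU)
  le := hE.subdivision_le_sup hN hM
  adj := hE.subdivision_adj hN hM ha hu₀
  col_ne _ := hE.subdivisionColoring_ne hN hM ha hx hxy

end IsEarExtension

end Rematch

namespace RemovableColoring

variable [Finite V]

theorem exists_isEarExtension_of_apply_eq (h : RemovableColoring H M U col)
    (hN : IsMatchingMap ⊤ N) (u₀ : V) (hNM : ∀ v, v ∉ U → N v = M v) :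
    ∃ K₁ U₁ col₁, IsEarExtension H M N U u₀ K₁ U₁ col₁ ∧
      potential H U col - 1 ≤ potential K₁ U₁ col₁ ∧
      (H.Adj u₀ (N u₀) → potential H U col ≤ potential K₁ U₁ col₁) := by
  have hNU (v) (hv : v ∈ U) : N v ∈ U := by
    by_contra hNv
    have : v = M (N v) := by rw [← hNM _ hNv, hN.involutive]
    exact hNv (h.isMatchingMap.involutive.eq_iff.1 this.symm ▸ h.apply_mem v hv)
  have hN' : IsMatchingMap (H ⊔ matchingGraph N) N :=
    hN.isMatchingMap_matchingGraph.mono le_sup_right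
  have hU (a b) (hab : (H ⊔ matchingGraph N).Adj a b) : a ∈ U ∨ M a = b := by
    rcases hab with hab | hab
    · exact h.mem_or_eq a b hab
    · exact or_iff_not_imp_left.2 fun ha => hNM a ha ▸ hN.matchingGraph_adj.1 hab
  obtain ⟨K₁, col₁, hK₁, hle, h₁, hpot, hcol⟩ := h.exists_closure le_sup_left hU
  have hle' : K₁ ⊔ edge u₀ (N u₀) ≤ H ⊔ matchingGraph N :=
    sup_le hle ((edge_le_iff _).2 (.inr (hN'.adj u₀)))
  refine ⟨K₁ ⊔ edge u₀ (N u₀), U, col₁, ?_, ?_, fun hadj => ?_⟩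
  · exact
      { removableColoring := h₁.mono le_sup_left fun a b hab => hU a b (hle' hab)
        subset := subset_rfl
        apply_ne := fun v hv hvU => absurd hv hvU
        le := hle'
        adj := .inr ((edge_adj ..).2 ⟨.inl ⟨rfl, rfl⟩, (hN.apply_ne u₀).symm⟩)
        col_ne := fun v hv _ => hcol v hv (N v) (hNU v hv) ⟨N, hN'.isMatchingMapOff v⟩ }
  · have := ncard_edgeSet_sup_edge_le K₁ u₀ (N u₀)
    rw [potential] at hpot ⊢
    grind [potential]
  · rwa [sup_eq_left.2 ((edge_le_iff K₁).2 (.inr (hK₁ hadj)))]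

theorem exists_isEarExtension_of_mem (h : RemovableColoring H M U col) (hN : IsMatchingMap ⊤ N)
    (hu₀ : u₀ ∈ U) (hNu₀ : N u₀ ∈ U) :
    ∃ K₁ U₁ col₁, IsEarExtension H M N U u₀ K₁ U₁ col₁ ∧
      potential H U col - 1 ≤ potential K₁ U₁ col₁ ∧
      (H.Adj u₀ (N u₀) → potential H U col ≤ potential K₁ U₁ col₁) := by
  classical
  have hM := h.isMatchingMap
  induction hd : {v | v ∉ U ∧ N v ≠ M v}.ncard using Nat.strong_induction_on generalizing N with
  | _ d ih =>
    subst hd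
    by_cases hNM : ∀ v, v ∉ U → N v = M v
    · exact h.exists_isEarExtension_of_apply_eq hN u₀ hNM
    push Not at hNM
    obtain ⟨a, ha, haN⟩ := hNM
    have hR : rematch N M a u₀ = N u₀ := rematch_apply_of_ne hN (ne_of_mem_of_not_mem hu₀ ha)
      (ne_of_mem_of_not_mem hu₀ (h.apply_notMem ha))
      (fun hu => ne_of_mem_of_not_mem hNu₀ ha (hN.involutive.eq_iff.2 hu))
      (fun hu => ne_of_mem_of_not_mem hNu₀ (h.apply_notMem ha) (hN.involutive.eq_iff.2 hu))
    obtain ⟨K₁, U₁, col₁, hE, hpot, hpot'⟩ := ih _ (ncard_rematch_ne_lt hN hM ha haN)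
      (isMatchingMap_rematch hN M a) (hR.symm ▸ hNu₀) rfl
    rw [hR] at hpot'
    by_cases hxy : N a ∈ U₁ ∧ K₁.Adj (N a) (N (M a))
    · have := hE.removableColoring.potential_le_potential_subdivide hxy.1
        (hE.removableColoring.mem_of_adj hxy.1 hxy.2) (hE.notMem hN hM ha)
      exact ⟨_, _, _, hE.subdivide hN hM ha haN hu₀ hxy.1 hxy.2, hpot.trans this,
        fun hadj => (hpot' hadj).trans this⟩
    · exact ⟨K₁, U₁, col₁, hE.of_rematch hN hM ha haN hR (not_and.1 hxy), hpot, hpot'⟩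

theorem exists_isEarExtension_of_notMem (h : RemovableColoring H M U col) (hN : IsMatchingMap ⊤ N)
    (hu₀ : u₀ ∈ U) (hNu₀ : N u₀ ∉ U) :
    ∃ K₁ U₁ col₁, IsEarExtension H M N U u₀ K₁ U₁ col₁ ∧
      potential H U col ≤ potential K₁ U₁ col₁ ∧
      (N (M (N u₀)) ∉ U → potential H U col < potential K₁ U₁ col₁) := by
  classical
  have hM := h.isMatchingMap
  induction hd : {v | v ∉ U ∧ N v ≠ M v}.ncard using Nat.strong_induction_on generalizing N with
  | _ d ih =>
    subst hd
    obtain ⟨a, rfl⟩ : ∃ a, u₀ = N a := ⟨N u₀, (hN.involutive u₀).symm⟩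
    rw [hN.involutive] at hNu₀ ⊢
    have haN : N a ≠ M a := ne_of_mem_of_not_mem hu₀ (h.apply_notMem hNu₀)
    have hR : rematch N M a (N a) = N (M a) := rematch_apply_apply hN hM
    have hN' := isMatchingMap_rematch hN M a
    have key {K₁ U₁ col₁} (hE : IsEarExtension H M (rematch N M a) U (N a) K₁ U₁ col₁) :
        IsEarExtension H M N U (N a) (subdivision K₁ M (N a) (N (M a)) a)
          (insert a (insert (M a) U₁)) (subdivisionColoring col₁ M (N a) (N (M a)) a) :=
      hE.subdivide hN hM hNu₀ haN hu₀ (hE.subset hu₀) (hR ▸ hE.adj)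
    by_cases hy : N (M a) ∈ U
    · obtain ⟨K₁, U₁, col₁, hE, hpot, hpot'⟩ :=
        h.exists_isEarExtension_of_mem hN' hu₀ (hR.symm ▸ hy)
      refine ⟨_, _, _, key hE, ?_, fun hy' => absurd hy hy'⟩
      have hx := hE.subset hu₀
      have ha₁ := hE.notMem hN hM hNu₀
      by_cases hadj : H.Adj (N a) (N (M a))
      · exact (hpot' (hR.symm ▸ hadj)).trans
          (hE.removableColoring.potential_le_potential_subdivide hx (hE.subset hy) ha₁)
      · have := hE.removableColoring.potential_lt_potential_subdivide hx (hE.subset hy) ha₁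
          (hR ▸ hE.adj) fun hMx => hadj (hMx ▸ hM.adj _)
        lia
    · obtain ⟨K₁, U₁, col₁, hE, hpot, -⟩ :=
        ih _ (ncard_rematch_ne_lt hN hM hNu₀ haN) hN' (hR.symm ▸ hy) rfl
      have hxy : K₁.Adj (N a) (N (M a)) := hR ▸ hE.adj
      have := hE.removableColoring.potential_lt_potential_subdivide (hE.subset hu₀)
        (hE.removableColoring.mem_of_adj (hE.subset hu₀) hxy) (hE.notMem hN hM hNu₀) hxy
        (ne_of_mem_of_not_mem (h.apply_mem _ hu₀) hy)
      exact ⟨_, _, _, key hE, hpot.trans this.le, fun _ => hpot.trans_lt this⟩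

end RemovableColoring

end Ears

section SparseSubgraph

variable {V : Type*} {G K K' : SimpleGraph V} {M N f g : V → V} {Q U : Set V} {u p : V}

theorem IsMatchingMap.piecewise [∀ v, Decidable (v ∈ Q)] (hf : IsMatchingMap K f)
    (hg : IsMatchingMap K g) (hfQ : ∀ v ∈ Q, f v ∈ Q) (hgQ : ∀ v ∈ Q, g v ∈ Q) :
    IsMatchingMap K (Q.piecewise f g) where
  involutive v := by
    by_cases hv : v ∈ Q
    · simp only [hv, hfQ v hv, Set.piecewise_eq_of_mem, hf.involutive v]
    · have : g v ∉ Q := fun h => hv (hg.involutive v ▸ hgQ _ h)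
      simp only [hv, this, not_false_eq_true, Set.piecewise_eq_of_notMem, hg.involutive v]
  adj v := by
    by_cases hv : v ∈ Q
    · simpa only [hv, Set.piecewise_eq_of_mem] using hf.adj v
    · simpa only [hv, not_false_eq_true, Set.piecewise_eq_of_notMem] using hg.adj v

theorem IsMatchingMap.ncard_edgeSet_matchingGraph [Finite V] (hM : IsMatchingMap K M) :
    2 * (matchingGraph M).edgeSet.ncard = Nat.card V := by
  classical
  have := Fintype.ofFinite V
  have hdeg (v) : (matchingGraph M).degree v = 1 :=
    degree_eq_one_iff_existsUnique_adj.2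
      ⟨M v, hM.matchingGraph_adj.2 rfl, fun _ h => (hM.matchingGraph_adj.1 h).symm⟩
  rw [← coe_edgeFinset, Set.ncard_coe_finset, ← sum_degrees_eq_twice_card_edges]
  simp only [hdeg, Finset.sum_const, Finset.card_univ, smul_eq_mul, mul_one,
    Nat.card_eq_fintype_card]

theorem IsMatchingMap.removableColoring_matchingGraph [DecidableEq V] (hM : IsMatchingMap K M)
    (u : V) :
    RemovableColoring (matchingGraph M) M {u, M u} (fun v => if v = u then 0 else 1) where
  isMatchingMap := hM.isMatchingMap_matchingGraph
  apply_mem := by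
    rintro v (rfl | rfl)
    exacts [.inr rfl, .inl (hM.involutive _)]
  mem_or_eq _ _ h := .inr (hM.matchingGraph_adj.1 h)
  col_ne := by
    have := hM.apply_ne u
    rintro v (rfl | rfl) <;> simp [hM.involutive _, this]
  exists_off x hx y hy hxy := by
    obtain rfl : M x = y := by
      rcases hx with rfl | rfl <;> rcases hy with rfl | rfl <;>
        first | exact absurd rfl hxy | exact hM.involutive _ | rfl
    exact ⟨M, hM.isMatchingMap_matchingGraph.isMatchingMapOff x⟩

theorem IsMatchingMap.potential_matchingGraph [Finite V] [DecidableEq V] (hM : IsMatchingMap K M)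
    (u : V) :
    2 * potential (matchingGraph M) {u, M u} (fun v => if v = u then 0 else 1) =
      8 - Nat.card V := by
  have hcol : (fun v => if v = u then 0 else 1) '' ({u, M u} : Set V) = ({0, 1} : Set ℕ) := by
    simp [Set.image_pair, hM.apply_ne]
  have := hM.ncard_edgeSet_matchingGraph
  rw [potential, hcol, Set.ncard_pair (hM.apply_ne u).symm, Set.ncard_pair zero_ne_one]
  lia

theorem exists_initial_removableColoring [Finite V] (hM : IsMatchingMap G M)
    (hN : IsMatchingMap G N) (hu : N u ≠ M u) (hNu : N (M (N u)) ≠ M u) :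
    ∃ K ≤ G, ∃ U col, U.Nonempty ∧ RemovableColoring K M U col ∧
      10 ≤ 2 * potential K U col + Nat.card V := by
  classical
  have hpot := hM.potential_matchingGraph u
  have hMN : N (M (N u)) ≠ u := fun h =>
    hM.apply_ne (N u) (hN.involutive.eq_iff.1 h)
  obtain ⟨K, U, col, hE, -, hlt⟩ :=
    (hM.removableColoring_matchingGraph u).exists_isEarExtension_of_notMem (hN.mono le_top)
      (.inl rfl) (by simp [hN.apply_ne, hu])
  have := hlt (by simp [hMN, hNu])
  exact ⟨K, hE.le.trans (sup_le hM.matchingGraph_le hN.matchingGraph_le), U, col,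
    ⟨u, hE.subset (.inl rfl)⟩, hE.removableColoring, by lia⟩

variable [Fintype V]

theorem IsBicritical.mono (hK : K ≤ K') (h : IsBicritical K) : IsBicritical K' :=
  isBicritical_iff.2 fun u v huv => (isBicritical_iff.1 h u v huv).imp fun _ hf => hf.mono hK

theorem IsMinimalBicritical.eq_of_le (hG : IsMinimalBicritical G) (hK : K ≤ G)
    (h : IsBicritical K) : K = G := by
  refine hK.antisymm fun a b hab => ?_
  by_contra hne
  refine hG.2 s(a, b) hab (h.mono ?_)
  intro u v huv
  rw [deleteEdges_adj, Set.mem_singleton_iff, ← mem_edgeSet]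
  exact ⟨hK huv, fun h => hne ((mem_edgeSet K).1 (h ▸ (mem_edgeSet K).2 huv))⟩

namespace IsBicritical

theorem exists_isMatchingMap_of_adj (hG : IsBicritical G) (hup : G.Adj u p) :
    ∃ N, IsMatchingMap G N ∧ N u = p := by
  obtain ⟨N, hN⟩ := isBicritical_iff.1 hG u p hup.ne
  exact ⟨N, hN.isMatchingMap hup, hN.apply_left⟩

theorem exists_isMatchingMap (hG : IsBicritical G) (hn : 2 < Fintype.card V) :
    ∃ M, IsMatchingMap G M := by
  obtain ⟨a, b, c, hab, hac, hbc⟩ := Fintype.two_lt_card_iff.1 hn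
  obtain ⟨f, hf⟩ := isBicritical_iff.1 hG a b hab
  obtain ⟨M, hM, -⟩ := hG.exists_isMatchingMap_of_adj (hf.adj c hac.symm hbc.symm)
  exact ⟨M, hM⟩

theorem exists_adj_notMem (hG : IsBicritical G) (hne : U.Nonempty) (hU : U ≠ Set.univ)
    (heven : Even U.ncard) : ∃ u ∈ U, ∃ p ∉ U, G.Adj u p := by
  by_contra! hclosed
  obtain ⟨u, hu⟩ := hne
  obtain ⟨v, hv⟩ := (Set.ne_univ_iff_exists_notMem U).1 hU
  obtain ⟨f, hf⟩ := isBicritical_iff.1 hG u v (ne_of_mem_of_not_mem hu hv)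
  have hadj (w) (hw : w ∈ U \ {u}) : G.Adj w (f w) :=
    hf.adj w hw.2 (ne_of_mem_of_not_mem hw.1 hv)
  have hodd : Even (U \ {u}).ncard :=
    even_ncard_of_involutive hf.involutive
      (fun w hw => ⟨by_contra fun h => hclosed w hw.1 _ h (hadj w hw), fun h =>
        ne_of_mem_of_not_mem hw.1 hv ((hf.involutive.eq_iff.1 h).trans hf.apply_left)⟩)
      fun w hw => (hadj w hw).ne'
  rw [← Set.ncard_sdiff_singleton_add_one hu] at heven
  exact Nat.not_even_iff_odd.2 hodd.add_one heven

theorem exists_isMatchingMap_apply_notMem (hG : IsBicritical G) (hne : U.Nonempty)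
    (hU : U ≠ Set.univ) (heven : Even U.ncard) :
    ∃ N, IsMatchingMap G N ∧ ∃ u ∈ U, N u ∉ U := by
  obtain ⟨u, hu, p, hp, hup⟩ := hG.exists_adj_notMem hne hU heven
  obtain ⟨N, hN, rfl⟩ := hG.exists_isMatchingMap_of_adj hup
  exact ⟨N, hN, u, hu, hp⟩

theorem exists_isMatchingMap_ne (hG : IsBicritical G) (hn : 2 < Fintype.card V)
    (hM : IsMatchingMap G M) : ∃ N, IsMatchingMap G N ∧ ∃ a, N a ≠ M a := by
  obtain ⟨a⟩ : Nonempty V := Fintype.card_pos_iff.1 (by lia)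
  have hcard : ({a, M a} : Set V).ncard = 2 := Set.ncard_pair (hM.apply_ne a).symm
  have huniv : ({a, M a} : Set V) ≠ Set.univ := fun h => by
    rw [h, Set.ncard_univ, Nat.card_eq_fintype_card] at hcard
    lia
  obtain ⟨N, hN, u, hu, hNu⟩ :=
    hG.exists_isMatchingMap_apply_notMem (Set.insert_nonempty _ _) huniv (hcard ▸ even_two)
  refine ⟨N, hN, u, fun h => hNu (h ▸ ?_)⟩
  rcases hu with rfl | rfl
  exacts [.inr rfl, .inl (hM.involutive a)]

/-- If all alternating cycles had length four, replacing `M` by `N` on one such cycle `Q` would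
give a matching `M'` for which an edge leaving `Q` lies on a different alternating four-cycle. -/
theorem exists_alternating_path (hG : IsBicritical G) (hn : 4 < Fintype.card V) :
    ∃ M N u, IsMatchingMap G M ∧ IsMatchingMap G N ∧ N u ≠ M u ∧ N (M (N u)) ≠ M u := by
  classical
  by_contra! hcycle
  obtain ⟨M, hM⟩ := hG.exists_isMatchingMap (by lia)
  obtain ⟨N, hN, a, ha⟩ := hG.exists_isMatchingMap_ne (by lia) hM
  have hNMN : N (M (N a)) = M a := hcycle M N a hM hN ha
  have hMM := hM.involutive
  have hNN := hN.involutive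
  let Q : Set V := {a, M a, N a, M (N a)}
  have hMQ : ∀ v ∈ Q, M v ∈ Q := by
    rintro v (rfl | rfl | rfl | rfl) <;> simp [Q, hMM _]
  have hNQ : ∀ v ∈ Q, N v ∈ Q := by
    rintro v (rfl | rfl | rfl | rfl) <;> simp [Q, hNN _, hNMN, hNN.eq_iff.2 hNMN.symm]
  have hne : ∀ v ∈ Q, N v ≠ M v := by
    rintro v (rfl | rfl | rfl | rfl) <;> grind [Function.Involutive]
  have huniv : Q ≠ Set.univ := fun h => by
    have hQ : (({a, M a, N a, M (N a)} : Finset V) : Set V) = Set.univ := by simpa [Q] using h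
    have := Finset.card_le_four (a := a) (b := M a) (c := N a) (d := M (N a))
    rw [Finset.coe_eq_univ.1 hQ, Finset.card_univ] at this
    lia
  obtain ⟨N', hN', p, hp, hNp⟩ := hG.exists_isMatchingMap_apply_notMem (Set.insert_nonempty _ _)
    huniv (hM.even_ncard hMQ)
  have hM' := hN.piecewise hM hNQ hMQ
  have hMp : N' (M (N' p)) = M p := hcycle M N' p hM hN' fun h => hNp (h ▸ hMQ p hp)
  have hMp' := hcycle _ N' p hM' hN' fun h => hNp (h ▸ (Q.piecewise_eq_of_mem N M hp) ▸ hNQ p hp)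
  rw [Q.piecewise_eq_of_mem N M hp, Q.piecewise_eq_of_notMem N M hNp] at hMp'
  exact hne p hp (hMp'.symm.trans hMp)

theorem exists_removableColoring_univ (hG : IsBicritical G) (hn : 4 < Fintype.card V) :
    ∃ K ≤ G, ∃ M col, RemovableColoring K M Set.univ col ∧
      10 ≤ 2 * potential K Set.univ col + Nat.card V := by
  obtain ⟨M, N, u, hM, hN, hu, hNu⟩ := hG.exists_alternating_path hn
  obtain ⟨K₀, hK₀, U₀, col₀, h₀⟩ := exists_initial_removableColoring hM hN hu hNu
  obtain ⟨U, ⟨hne, K, hK, col, h, hpot⟩, hmax⟩ :=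
    (Set.toFinite {U : Set V | U.Nonempty ∧ ∃ K ≤ G, ∃ col, RemovableColoring K M U col ∧
      10 ≤ 2 * potential K U col + Nat.card V}).exists_maximal ⟨U₀, h₀.1, K₀, hK₀, col₀, h₀.2⟩
  suffices hU : U = Set.univ by
    subst hU
    exact ⟨K, hK, M, col, h, hpot⟩
  by_contra hU
  obtain ⟨N₁, hN₁, u₀, hu₀, hNu₀⟩ := hG.exists_isMatchingMap_apply_notMem hne hU
    (h.isMatchingMap.even_ncard h.apply_mem)
  obtain ⟨K₁, U₁, col₁, hE, hpot₁, -⟩ :=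
    h.exists_isEarExtension_of_notMem (hN₁.mono le_top) hu₀ hNu₀
  have hU₁ : U₁ ⊆ U := hmax ⟨hne.mono hE.subset, K₁,
    hE.le.trans (sup_le hK hN₁.matchingGraph_le), col₁, hE.removableColoring, by lia⟩ hE.subset
  exact hNu₀ (hU₁ (hE.removableColoring.mem_of_adj (hE.subset hu₀) hE.adj))

theorem exists_isBicritical_le_two_mul_ncard_edgeSet (hG : IsBicritical G)
    (hn : 4 < Fintype.card V) :
    ∃ K ≤ G, IsBicritical K ∧ 2 * K.edgeSet.ncard + 10 ≤ 5 * Fintype.card V := by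
  obtain ⟨K₀, hK₀, M, col₀, h₀, hpot₀⟩ := hG.exists_removableColoring_univ hn
  obtain ⟨K, col, -, hK, h, hpot, hcol⟩ := h₀.exists_closure hK₀ fun _ _ _ => .inl trivial
  refine ⟨K, hK, isBicritical_iff.2 fun u v huv => ?_, ?_⟩
  · exact h.exists_off u trivial v trivial
      (hcol u trivial v trivial (isBicritical_iff.1 hG u v huv))
  · have : (col '' Set.univ).ncard ≤ (Set.univ : Set V).ncard := Set.ncard_image_le
    have hdef : potential K Set.univ col =
      (Set.univ : Set V).ncard + (col '' Set.univ).ncard - K.edgeSet.ncard := rfl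
    rw [Nat.card_eq_fintype_card] at hpot₀
    rw [Set.ncard_univ, Nat.card_eq_fintype_card] at this hdef
    lia

end IsBicritical

end SparseSubgraph

theorem minimal_bicritical_edge_bound {V : Type*} [Fintype V]
    (G : SimpleGraph V) [DecidableRel G.Adj]
    (hn : 6 ≤ Fintype.card V) (hG : IsMinimalBicritical G) :
    2 * G.edgeFinset.card ≤ 5 * (Fintype.card V - 2) := by
  obtain ⟨K, hK, hKbic, hcard⟩ :=
    hG.1.exists_isBicritical_le_two_mul_ncard_edgeSet (Nat.lt_of_succ_lt hn)
  obtain rfl := hG.eq_of_le hK hKbic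
  rw [← Set.ncard_coe_finset, coe_edgeFinset]
  lia
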